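/- arXiv:math/0210307 — 2 statements merged into one kernel-verified Lean document; each statement's English description precedes it below -/
import Mathlib

section
/- Let G be a group and m ≥ 1 an integer. Two m-tuples τ, τ' ∈ G^m are Nielsen-equivalent in G if and only if there exists an automorphism α of the free group FreeGroup (Fin m) such that for every i, τ'(i) = (FreeGroup.lift τ)(α(FreeGroup.of i)). -/
/-- An elementary Nielsen move on an `m`-tuple of elements of a group `G`:
replace some `gᵢ` by `gᵢ⁻¹`, or interchange `gᵢ` and `gⱼ` for some `i ≠ j`,
or replace `gᵢ` by `gᵢ * gⱼ` for some `i ≠ j`. -/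
def NielsenMove {G : Type*} [Group G] {m : ℕ} (τ τ' : Fin m → G) : Prop :=
  (∃ i, τ' = Function.update τ i (τ i)⁻¹) ∨
  (∃ i j, i ≠ j ∧ τ' = τ ∘ Equiv.swap i j) ∨
  (∃ i j, i ≠ j ∧ τ' = Function.update τ i (τ i * τ j))

/-- Two `m`-tuples are Nielsen-equivalent in `G` if one is obtained from the
other by a finite chain of elementary Nielsen moves. -/
def NielsenEquiv {G : Type*} [Group G] {m : ℕ} (τ τ' : Fin m → G) : Prop :=
  Relation.ReflTransGen NielsenMove τ τ'

/-!
Elementary moves commute with homomorphisms, so the tuples Nielsen-equivalent to `τ` are the images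
under `FreeGroup.lift τ` of the tuples Nielsen-equivalent to the standard basis. The latter are
exactly the bases `α ∘ FreeGroup.of`: Nielsen moves are invertible, and conversely Nielsen's
cancellation argument applies. Order the elements of the free group by length, breaking ties by a
lexicographic rank of the reduced words of an element and of its inverse. In a tuple of nontrivial
elements that no move decreases, each factor of a reduced word in the entries keeps a letter after
cancelling against its two neighbours, so the product is at least as long as the word. A basis
element therefore can only be expressed by a word of length one: up to signs and order, the tuple is
the standard basis.
-/

open Function FreeGroup

section CommonPrefix

variable {β : Type*} [DecidableEq β]

/-- The length of the longest common prefix of two words, which measures cancellation in free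
groups. -/
def commonPrefixLength : List β → List β → ℕ
  | a :: l, b :: l' => if a = b then commonPrefixLength l l' + 1 else 0
  | _, _ => 0

@[simp]
theorem commonPrefixLength_nil_left (l : List β) : commonPrefixLength [] l = 0 := by
  cases l <;> rfl

@[simp]
theorem commonPrefixLength_nil_right (l : List β) : commonPrefixLength l [] = 0 := by
  cases l <;> rfl

theorem commonPrefixLength_cons_cons (a b : β) (l l' : List β) :
    commonPrefixLength (a :: l) (b :: l') = if a = b then commonPrefixLength l l' + 1 else 0 :=
  rfl

theorem commonPrefixLength_comm (l l' : List β) :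
    commonPrefixLength l l' = commonPrefixLength l' l := by
  induction l generalizing l' with
  | nil => simp
  | cons a l ih =>
    cases l' with
    | nil => simp
    | cons b l' => simp only [commonPrefixLength_cons_cons, ih l', eq_comm]

theorem length_le_commonPrefixLength (p s t : List β) :
    p.length ≤ commonPrefixLength (p ++ s) (p ++ t) := by
  induction p with
  | nil => simp
  | cons a p ih => simpa [commonPrefixLength_cons_cons] using ih

theorem exists_eq_append_of_commonPrefixLength (l l' : List β) :
    ∃ p s t, l = p ++ s ∧ l' = p ++ t ∧ p.length = commonPrefixLength l l' ∧
      ∀ x ∈ s.head?, ∀ y ∈ t.head?, x ≠ y := by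
  induction l generalizing l' with
  | nil => exact ⟨[], [], l', by simp⟩
  | cons a l ih =>
    cases l' with
    | nil => exact ⟨[], a :: l, [], by simp⟩
    | cons b l' =>
      by_cases h : a = b
      · obtain ⟨p, s, t, rfl, rfl, hp, hst⟩ := ih l'
        exact ⟨a :: p, s, t, by simp, by simp [h],
          by simp [commonPrefixLength_cons_cons, h, hp], hst⟩
      · exact ⟨[], a :: l, b :: l', by simp, by simp,
          by simp [commonPrefixLength_cons_cons, h], by simpa⟩

theorem commonPrefixLength_eq_of_lt {l₁ l₂ l₃ : List β}
    (h : commonPrefixLength l₁ l₂ < commonPrefixLength l₂ l₃) :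
    commonPrefixLength l₁ l₃ = commonPrefixLength l₁ l₂ := by
  induction l₁ generalizing l₂ l₃ with
  | nil => simp
  | cons a l₁ ih =>
    rcases l₂ with _ | ⟨b, l₂⟩
    · simp at h
    rcases l₃ with _ | ⟨c, l₃⟩
    · simp at h
    have := @ih l₂ l₃
    grind [commonPrefixLength_cons_cons]

end CommonPrefix

section Cancellation

variable {α : Type*}

theorem isReduced_invRev {L : List (α × Bool)} (h : IsReduced L) : IsReduced (invRev L) := by
  classical
  rw [isReduced_iff_reduce_eq, reduce_invRev, h.reduce_eq]

theorem isReduced_append_of_head?_invRev_ne {s t : List (α × Bool)} (hs : IsReduced s)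
    (ht : IsReduced t) (h : ∀ x ∈ (invRev s).head?, ∀ y ∈ t.head?, x ≠ y) :
    IsReduced (s ++ t) := by
  refine List.isChain_append.2 ⟨hs, ht, fun x hx y hy hxy ↦ ?_⟩
  have hx' : (x.1, !x.2) ∈ (invRev s).head? := by
    rw [invRev, List.head?_reverse, List.getLast?_map, Option.mem_def.1 hx]
    rfl
  by_contra hne
  exact h _ hx' y hy (Prod.ext hxy (Bool.not_eq_eq_eq_not.2 (Bool.eq_not.2 hne)))

variable [DecidableEq α]

/-- The number of letters of `y` that cancel in the product `x * y` of free group elements. -/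
def cancelLength (x y : FreeGroup α) : ℕ := commonPrefixLength x⁻¹.toWord y.toWord

theorem cancelLength_inv_inv (x y : FreeGroup α) :
    cancelLength y⁻¹ x⁻¹ = cancelLength x y := by
  rw [cancelLength, inv_inv, commonPrefixLength_comm, cancelLength]

theorem exists_toWord_eq_append_of_mul (x y : FreeGroup α) :
    ∃ s p t, x.toWord = s ++ invRev p ∧ y.toWord = p ++ t ∧ (x * y).toWord = s ++ t ∧
      p.length = cancelLength x y := by
  obtain ⟨p, s, t, hx, hy, hp, hst⟩ :=
    exists_eq_append_of_commonPrefixLength x⁻¹.toWord y.toWord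
  replace hx : x.toWord = invRev s ++ invRev p := by
    rw [← inv_inv x, toWord_inv, hx, invRev_append]
  refine ⟨invRev s, p, t, hx, hy, ?_, hp⟩
  have hs : IsReduced (invRev s) := List.IsChain.left_of_append (hx ▸ isReduced_toWord (x := x))
  have ht : IsReduced t := List.IsChain.right_of_append (hy ▸ isReduced_toWord (x := y))
  have hred : IsReduced (invRev s ++ t) :=
    isReduced_append_of_head?_invRev_ne hs ht (by rwa [invRev_invRev])
  have hmul : x * y = mk (invRev s ++ t) := by
    rw [← mk_toWord (x := x), ← mk_toWord (x := y), hx, hy]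
    simp only [← mul_mk, ← inv_mk]
    group
  rw [hmul, toWord_mk, hred.reduce_eq]

theorem norm_mul_add_two_mul_cancelLength (x y : FreeGroup α) :
    (x * y).norm + 2 * cancelLength x y = x.norm + y.norm := by
  obtain ⟨s, p, t, hx, hy, hxy, hp⟩ := exists_toWord_eq_append_of_mul x y
  simp only [FreeGroup.norm, hx, hy, hxy, ← hp, List.length_append, invRev_length]
  omega

theorem norm_lt_norm_mul_self {x : FreeGroup α} (hx : x ≠ 1) : x.norm < (x * x).norm := by
  set c := reduceCyclically.conjugator x.toWord
  set r := reduceCyclically x.toWord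
  have hword : c ++ r ++ invRev c = x.toWord :=
    reduceCyclically.conj_conjugator_reduceCyclically x.toWord
  have hsq : (x * x).toWord = c ++ (r ++ r) ++ invRev c := by
    rw [← pow_two, toWord_pow,
      reduceCyclically.reduce_flatten_replicate_succ isReduced_toWord 1]
    simp [List.replicate, c, r]
  have hr : r ≠ [] := by
    intro hr
    apply hx
    rw [← mk_toWord (x := x), ← hword, hr, List.append_nil, ← mul_mk, ← inv_mk, mul_inv_cancel]
  have := List.length_pos_iff.2 hr
  simp only [FreeGroup.norm, hsq, ← hword, List.length_append]
  omega

theorem two_mul_cancelLength_self_lt {x : FreeGroup α} (hx : x ≠ 1) :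
    2 * cancelLength x x < x.norm := by
  have := norm_mul_add_two_mul_cancelLength x x
  have := norm_lt_norm_mul_self hx
  omega

end Cancellation

section SignedEntry

variable {ι G : Type*} [Group G]

/-- The entry of the tuple `v`, or its inverse, that a letter of the free group on the indices
stands for. -/
def signedEntry (v : ι → G) (a : ι × Bool) : G := FreeGroup.lift v (FreeGroup.mk [a])

@[simp]
theorem signedEntry_true (v : ι → G) (i : ι) : signedEntry v (i, true) = v i := by
  simp [signedEntry]

@[simp]
theorem signedEntry_false (v : ι → G) (i : ι) : signedEntry v (i, false) = (v i)⁻¹ := by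
  simp [signedEntry]

theorem signedEntry_not (v : ι → G) (a : ι × Bool) :
    signedEntry v (a.1, !a.2) = (signedEntry v a)⁻¹ := by
  rcases a with ⟨i, _ | _⟩ <;> simp

theorem signedEntry_ne_one {v : ι → G} (hv : ∀ i, v i ≠ 1) (a : ι × Bool) :
    signedEntry v a ≠ 1 := by
  rcases a with ⟨i, _ | _⟩ <;> simp [hv]

theorem lift_mk_cons (v : ι → G) (a : ι × Bool) (L : List (ι × Bool)) :
    FreeGroup.lift v (FreeGroup.mk (a :: L)) =
      signedEntry v a * FreeGroup.lift v (FreeGroup.mk L) := by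
  rw [signedEntry, ← _root_.map_mul, mul_mk, List.singleton_append]

end SignedEntry

section SurvivingLetters

variable {ι α : Type*} [DecidableEq α]

/-- Nielsen's conditions N0 and N2: in a reduced word in the entries of `v`, cancellation against
its two neighbours never exhausts a factor. The letters `a`, `b`, `c` may coincide, so this bounds
the cancellation between two neighbours as well. -/
def HasSurvivingLetters (v : ι → FreeGroup α) : Prop :=
  ∀ ⦃a b c : ι × Bool⦄, IsReduced [a, b, c] →
    cancelLength (signedEntry v a) (signedEntry v b) +
      cancelLength (signedEntry v b) (signedEntry v c) < (signedEntry v b).norm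

namespace HasSurvivingLetters

variable {v : ι → FreeGroup α}

/- Multiplying by further factors on the right leaves a nonempty prefix of the second factor beyond
what cancels against the first. -/
theorem cancelLength_lift_mk_cons (hv : HasSurvivingLetters v) {a b : ι × Bool}
    {L : List (ι × Bool)} (h : IsReduced (a :: b :: L)) :
    cancelLength (signedEntry v a) (FreeGroup.lift v (FreeGroup.mk (b :: L))) =
      cancelLength (signedEntry v a) (signedEntry v b) := by
  induction L generalizing a b with
  | nil => rfl
  | cons c L ih =>
    set x := signedEntry v a
    set y := signedEntry v b
    set w := FreeGroup.lift v (FreeGroup.mk (c :: L))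
    have hw : cancelLength y w = cancelLength y (signedEntry v c) :=
      ih (isReduced_cons_cons.1 h).2
    have hlt : cancelLength x y + cancelLength y w < y.norm :=
      hw ▸ hv (List.IsChain.left_of_append (l₁ := [a, b, c]) h)
    have hyw := norm_mul_add_two_mul_cancelLength y w
    have hcommon : cancelLength y⁻¹ (y * w) + cancelLength y w = y.norm := by
      have := norm_mul_add_two_mul_cancelLength y⁻¹ (y * w)
      rw [inv_mul_cancel_left, norm_inv_eq] at this
      omega
    rw [lift_mk_cons]
    refine commonPrefixLength_eq_of_lt (l₂ := y.toWord) ?_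
    change cancelLength x y < commonPrefixLength y.toWord (y * w).toWord
    rw [cancelLength, inv_inv] at hcommon
    omega

theorem cancelLength_add_length_le_norm_lift_mk (hv : HasSurvivingLetters v) {a b : ι × Bool}
    {L : List (ι × Bool)} (h : IsReduced (a :: b :: L)) :
    cancelLength (signedEntry v a) (signedEntry v b) + (b :: L).length ≤
      (FreeGroup.lift v (FreeGroup.mk (b :: L))).norm := by
  induction L generalizing a b with
  | nil =>
    have := hv (a := a) (b := b) (c := b) (by simpa using h)
    simp only [List.length_singleton]
    exact (Nat.le_add_right _ _).trans_lt this
  | cons c L ih =>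
    have hbc := (isReduced_cons_cons.1 h).2
    have hnorm := norm_mul_add_two_mul_cancelLength (signedEntry v b)
      (FreeGroup.lift v (FreeGroup.mk (c :: L)))
    rw [hv.cancelLength_lift_mk_cons hbc] at hnorm
    have := hv (List.IsChain.left_of_append (l₁ := [a, b, c]) h)
    have := ih hbc
    rw [lift_mk_cons, List.length_cons]
    omega

theorem norm_le_norm_lift [DecidableEq ι] (hv : HasSurvivingLetters v) (x : FreeGroup ι) :
    x.norm ≤ (FreeGroup.lift v x).norm := by
  have hred : IsReduced x.toWord := isReduced_toWord
  rw [FreeGroup.norm, ← mk_toWord (x := x), toWord_mk, hred.reduce_eq]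
  cases hx : x.toWord with
  | nil => simp
  | cons a L =>
    have := hv.cancelLength_add_length_le_norm_lift_mk (a := a) (b := a) (L := L)
      (isReduced_cons_cons.2 ⟨fun _ ↦ rfl, hx ▸ hred⟩)
    omega

theorem exists_eq_or_eq_inv_of_lift (hv : HasSurvivingLetters v) {x : FreeGroup ι}
    (hx : (FreeGroup.lift v x).norm = 1) :
    ∃ i, v i = FreeGroup.lift v x ∨ v i = (FreeGroup.lift v x)⁻¹ := by
  classical
  have hle : x.toWord.length ≤ 1 := hx ▸ hv.norm_le_norm_lift x
  have hne : x.toWord ≠ [] := by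
    rintro h
    simp [toWord_eq_nil_iff.1 h] at hx
  obtain ⟨⟨i, b⟩, hi⟩ :=
    List.length_eq_one_iff.1 (hle.antisymm (List.length_pos_iff.2 hne))
  have hxi : FreeGroup.lift v x = signedEntry v (i, b) := by
    rw [signedEntry, ← hi, mk_toWord]
  refine ⟨i, ?_⟩
  cases b <;> simp [hxi]

end HasSurvivingLetters

end SurvivingLetters

section Complexity

section WordRank

variable {β : Type*} [Fintype β]

/-- The letters of a word over a finite alphabet as numbers, in the order expected by
`Nat.ofDigits`: the least significant digit, which is the last letter, comes first. -/
noncomputable def wordDigits (L : List β) : List ℕ :=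
  (L.map fun a ↦ (Fintype.equivFin β a : ℕ)).reverse

/-- The value of a word over a finite alphabet read as a numeral. On words of equal length it
orders them lexicographically. The base is the size of the alphabet plus two, hence larger than one
even if the alphabet is empty. -/
noncomputable def wordRank (L : List β) : ℕ :=
  Nat.ofDigits (Fintype.card β + 2) (wordDigits L)

theorem lt_of_mem_wordDigits {L : List β} {d : ℕ} (hd : d ∈ wordDigits L) :
    d < Fintype.card β + 2 := by
  obtain ⟨a, -, rfl⟩ := List.mem_map.1 (List.mem_reverse.1 hd)
  omega

theorem wordRank_append (p s : List β) :
    wordRank (p ++ s) = wordRank s + (Fintype.card β + 2) ^ s.length * wordRank p := by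
  simp [wordRank, wordDigits, Nat.ofDigits_append]

theorem wordRank_lt (L : List β) : wordRank L < (Fintype.card β + 2) ^ L.length := by
  have := Nat.ofDigits_lt_base_pow_length' (l := wordDigits L) fun _ ↦ lt_of_mem_wordDigits
  simpa [wordRank, wordDigits] using this

theorem eq_of_wordRank_eq {p q : List β} (hlen : p.length = q.length)
    (h : wordRank p = wordRank q) : p = q := by
  have : wordDigits p = wordDigits q :=
    Nat.ofDigits_inj_of_len_eq (by omega) (by simpa [wordDigits] using hlen)
      (fun _ ↦ lt_of_mem_wordDigits) (fun _ ↦ lt_of_mem_wordDigits) h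
  exact List.map_injective_iff.2 (Fin.val_injective.comp (Equiv.injective _))
    (List.reverse_injective this)

theorem wordRank_le_of_add_le {p q r r' s s' : List β} (hr : r.length = r'.length)
    (hrs : r'.length ≤ s.length)
    (h : wordRank (s' ++ r) + wordRank (p ++ s) ≤ wordRank (s' ++ r') + wordRank (q ++ s)) :
    wordRank p ≤ wordRank q := by
  simp only [wordRank_append, hr] at h
  set B := Fintype.card β + 2
  have hlt : wordRank r' < B ^ s.length :=
    (wordRank_lt r').trans_le (Nat.pow_le_pow_right (by omega) hrs)
  refine Nat.le_of_lt_succ (Nat.lt_of_mul_lt_mul_left (a := B ^ s.length) ?_)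
  rw [Nat.mul_succ]
  omega

end WordRank

variable {α : Type*} [Fintype α] [DecidableEq α]

/-- The measure that Nielsen reduction decreases: the length of an element, and among elements of
the same length the ranks of the reduced words of the element and of its inverse. -/
noncomputable def complexity (x : FreeGroup α) : ℕ ×ₗ ℕ :=
  toLex (x.norm, wordRank x.toWord + wordRank x⁻¹.toWord)

theorem complexity_inv (x : FreeGroup α) : complexity x⁻¹ = complexity x := by
  simp [complexity, add_comm]

theorem norm_le_of_complexity_le {x y : FreeGroup α} (h : complexity x ≤ complexity y) :
    x.norm ≤ y.norm :=
  Prod.Lex.monotone_fst _ _ h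

/- Here `x` is at least as long as `y`, half of `y` cancels in `x * y`, and the lengths of `x` and
`x * y` agree, so that the ranks decide. The leading letters of `x⁻¹` and `(x * y)⁻¹` are those of
`y` and `y⁻¹`, and they outweigh the trailing letters, in which `x` and `x * y` differ. -/
theorem wordRank_take_le_of_complexity_le_mul {x y : FreeGroup α}
    (hy : y.norm = 2 * cancelLength x y) (hx : 2 * cancelLength x y ≤ x.norm)
    (h : complexity x ≤ complexity (x * y)) :
    wordRank (y.toWord.take (cancelLength x y)) ≤
      wordRank (y⁻¹.toWord.take (cancelLength x y)) := by
  have hxy : x.norm = (x * y).norm := by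
    have := norm_mul_add_two_mul_cancelLength x y
    omega
  have hrank : wordRank x.toWord + wordRank x⁻¹.toWord ≤
      wordRank (x * y).toWord + wordRank (x * y)⁻¹.toWord :=
    (Prod.Lex.toLex_le_toLex.1 h).elim (fun hlt ↦ absurd hxy hlt.ne) And.right
  obtain ⟨s, p, t, hxw, hyw, hxyw, hp⟩ := exists_toWord_eq_append_of_mul x y
  simp only [FreeGroup.norm, hxw, hyw, List.length_append, invRev_length] at hx hy
  have hpt : p.length = t.length := by omega
  simp only [toWord_inv, hxw, hxyw, invRev_append, invRev_invRev] at hrank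
  rw [toWord_inv, hyw, invRev_append, ← hp, List.take_left,
    List.take_left' (by rw [invRev_length, hpt])]
  exact wordRank_le_of_add_le (by rwa [invRev_length]) (by rw [invRev_length]; omega) hrank

end Complexity

section NielsenMinimal

variable {ι α : Type*} [Fintype α] [DecidableEq α]

/-- A tuple of free group elements in which multiplying an entry or its inverse by another entry or
its inverse never decreases the complexity: the end result of Nielsen reduction. -/
def IsNielsenMinimal (v : ι → FreeGroup α) : Prop :=
  ∀ ⦃a b : ι × Bool⦄, a.1 ≠ b.1 →
    complexity (signedEntry v a) ≤ complexity (signedEntry v a * signedEntry v b)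

theorem complexity_signedEntry (v : ι → FreeGroup α) (a : ι × Bool) :
    complexity (signedEntry v a) = complexity (v a.1) := by
  rcases a with ⟨i, _ | _⟩ <;> simp [complexity_inv]

namespace IsNielsenMinimal

variable {v : ι → FreeGroup α}

theorem two_mul_cancelLength_le_norm_right (hv : IsNielsenMinimal v) (hne : ∀ i, v i ≠ 1)
    {a b : ι × Bool} (hab : IsReduced [a, b]) :
    2 * cancelLength (signedEntry v a) (signedEntry v b) ≤ (signedEntry v b).norm := by
  by_cases h : a.1 = b.1
  · obtain rfl : a = b := Prod.ext h ((isReduced_cons_cons.1 hab).1 h)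
    exact (two_mul_cancelLength_self_lt (signedEntry_ne_one hne a)).le
  · have := norm_le_of_complexity_le (hv h)
    have := norm_mul_add_two_mul_cancelLength (signedEntry v a) (signedEntry v b)
    omega

theorem two_mul_cancelLength_le_norm_left (hv : IsNielsenMinimal v) (hne : ∀ i, v i ≠ 1)
    {a b : ι × Bool} (hab : IsReduced [a, b]) :
    2 * cancelLength (signedEntry v a) (signedEntry v b) ≤ (signedEntry v a).norm := by
  have := hv.two_mul_cancelLength_le_norm_right hne (isReduced_invRev hab)
  rwa [signedEntry_not, signedEntry_not, cancelLength_inv_inv, norm_inv_eq] at this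

theorem wordRank_take_le (hv : IsNielsenMinimal v) (hne : ∀ i, v i ≠ 1)
    {a b : ι × Bool} (hab : IsReduced [a, b])
    (h : (signedEntry v b).norm = 2 * cancelLength (signedEntry v a) (signedEntry v b)) :
    wordRank ((signedEntry v b).toWord.take ((signedEntry v b).norm / 2)) ≤
      wordRank ((signedEntry v b)⁻¹.toWord.take ((signedEntry v b).norm / 2)) := by
  have hindex : a.1 ≠ b.1 := by
    intro hindex
    obtain rfl : a = b := Prod.ext hindex ((isReduced_cons_cons.1 hab).1 hindex)
    exact (two_mul_cancelLength_self_lt (signedEntry_ne_one hne a)).ne' h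
  rw [h, Nat.mul_div_cancel_left _ two_pos]
  exact wordRank_take_le_of_complexity_le_mul h (hv.two_mul_cancelLength_le_norm_left hne hab)
    (hv hindex)

/- If the neighbours exhausted a factor `y`, each would cancel one half of it. Comparing ranks on
both sides, the first halves of `y` and `y⁻¹` would then agree. -/
theorem hasSurvivingLetters (hv : IsNielsenMinimal v) (hne : ∀ i, v i ≠ 1) :
    HasSurvivingLetters v := by
  intro a b c habc
  obtain ⟨hab, hbc⟩ : IsReduced [a, b] ∧ IsReduced [b, c] := by simp_all
  have hleft := hv.two_mul_cancelLength_le_norm_right hne hab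
  have hright := hv.two_mul_cancelLength_le_norm_left hne hbc
  by_contra! hexhaust
  have hrank := hv.wordRank_take_le hne hab (by omega)
  have hrank' := hv.wordRank_take_le hne (isReduced_invRev hbc) (by
    rw [signedEntry_not, signedEntry_not, cancelLength_inv_inv, norm_inv_eq]
    omega)
  rw [signedEntry_not, norm_inv_eq, inv_inv] at hrank'
  set y := signedEntry v b
  have hhalf : y.toWord.take (y.norm / 2) = y⁻¹.toWord.take (y.norm / 2) :=
    eq_of_wordRank_eq (by simp) (hrank.antisymm hrank')
  have hcancel : y.norm / 2 ≤ cancelLength y y := by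
    have := length_le_commonPrefixLength (y.toWord.take (y.norm / 2))
      (y⁻¹.toWord.drop (y.norm / 2)) (y.toWord.drop (y.norm / 2))
    rw [List.take_append_drop, hhalf, List.take_append_drop, List.length_take_of_le] at this
    · exact this
    · exact (Nat.div_le_self _ _).trans norm_inv_eq.ge
  have : 2 * cancelLength y y < y.norm :=
    two_mul_cancelLength_self_lt (signedEntry_ne_one hne b)
  omega

end IsNielsenMinimal

end NielsenMinimal

section NielsenEquiv

variable {G H : Type*} [Group G] [Group H] {m : ℕ}

namespace NielsenEquiv

theorem refl (τ : Fin m → G) : NielsenEquiv τ τ :=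
  Relation.ReflTransGen.refl

theorem trans {τ₁ τ₂ τ₃ : Fin m → G} (h : NielsenEquiv τ₁ τ₂) (h' : NielsenEquiv τ₂ τ₃) :
    NielsenEquiv τ₁ τ₃ :=
  Relation.ReflTransGen.trans h h'

theorem update_inv (τ : Fin m → G) (i : Fin m) : NielsenEquiv τ (update τ i (τ i)⁻¹) :=
  .single (.inl ⟨i, rfl⟩)

theorem comp_swap (τ : Fin m → G) {i j : Fin m} (h : i ≠ j) :
    NielsenEquiv τ (τ ∘ Equiv.swap i j) :=
  .single (.inr (.inl ⟨i, j, h, rfl⟩))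

theorem update_mul (τ : Fin m → G) {i j : Fin m} (h : i ≠ j) :
    NielsenEquiv τ (update τ i (τ i * τ j)) :=
  .single (.inr (.inr ⟨i, j, h, rfl⟩))

theorem update_mul_inv (τ : Fin m → G) {i j : Fin m} (h : i ≠ j) :
    NielsenEquiv τ (update τ i (τ i * (τ j)⁻¹)) := by
  have := ((update_inv τ j).trans (update_mul _ h)).trans (update_inv _ j)
  convert this using 1
  ext k
  simp only [update_apply]
  grind [inv_inv]

theorem symm {τ τ' : Fin m → G} (h : NielsenEquiv τ τ') : NielsenEquiv τ' τ := by
  induction h with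
  | refl => exact refl _
  | @tail σ _ _ hmove ih =>
    refine trans ?_ ih
    rcases hmove with ⟨i, rfl⟩ | ⟨i, j, hij, rfl⟩ | ⟨i, j, hij, rfl⟩
    · simpa using update_inv (update σ i (σ i)⁻¹) i
    · simpa [comp_assoc, ← Equiv.Perm.coe_mul] using comp_swap (σ ∘ Equiv.swap i j) hij
    · simpa [hij.symm] using update_mul_inv (update σ i (σ i * σ j)) hij

theorem comp_perm (τ : Fin m → G) (e : Equiv.Perm (Fin m)) : NielsenEquiv τ (τ ∘ e) := by
  induction e using Equiv.Perm.swap_induction_on' with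
  | one => exact refl _
  | mul_swap e i j hij ih => exact ih.trans (comp_swap _ hij)

theorem of_eq_or_eq_inv {τ τ' : Fin m → G} (h : ∀ i, τ' i = τ i ∨ τ' i = (τ i)⁻¹) :
    NielsenEquiv τ τ' := by
  suffices H : ∀ s : Finset (Fin m), NielsenEquiv τ (s.piecewise τ' τ) by
    simpa using H Finset.univ
  intro s
  induction s using Finset.induction_on with
  | empty => simpa using refl τ
  | insert i s hi ih =>
    refine ih.trans ?_
    rw [Finset.piecewise_insert]
    rcases h i with h | h <;> rw [h, ← Finset.piecewise_eq_of_notMem s τ' τ hi]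
    · rw [update_eq_self]
      exact refl _
    · exact update_inv _ i

theorem update_signedEntry_mul (τ : Fin m → G) {a b : Fin m × Bool} (h : a.1 ≠ b.1) :
    NielsenEquiv τ (update τ a.1 (signedEntry τ a * signedEntry τ b)) := by
  have hmul (σ : Fin m → G) : NielsenEquiv σ (update σ a.1 (σ a.1 * signedEntry σ b)) := by
    rcases b with ⟨j, _ | _⟩
    · simpa using update_mul_inv σ h
    · simpa using update_mul σ h
  rcases a with ⟨i, _ | _⟩
  · have hb : signedEntry (update τ i (τ i)⁻¹) b = signedEntry τ b := by
      rcases b with ⟨j, _ | _⟩ <;> simp [h.symm]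
    simpa [hb] using (update_inv τ i).trans (hmul _)
  · simpa using hmul τ

theorem map (f : G →* H) {τ τ' : Fin m → G} (h : NielsenEquiv τ τ') :
    NielsenEquiv (f ∘ τ) (f ∘ τ') := by
  refine Relation.ReflTransGen.lift (fun σ ↦ f ∘ σ) ?_ _ _ h
  rintro σ _ (⟨i, rfl⟩ | ⟨i, j, hij, rfl⟩ | ⟨i, j, hij, rfl⟩)
  · exact .inl ⟨i, by simp [comp_update]⟩
  · exact .inr (.inl ⟨i, j, hij, rfl⟩)
  · exact .inr (.inr ⟨i, j, hij, by simp [comp_update]⟩)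

theorem exists_eq_comp (f : G →* H) {σ : Fin m → G} {τ : Fin m → H}
    (h : NielsenEquiv (f ∘ σ) τ) : ∃ σ', NielsenEquiv σ σ' ∧ τ = f ∘ σ' := by
  induction h with
  | refl => exact ⟨σ, refl σ, rfl⟩
  | tail _ hmove ih =>
    obtain ⟨ρ, hρ, rfl⟩ := ih
    rcases hmove with ⟨i, rfl⟩ | ⟨i, j, hij, rfl⟩ | ⟨i, j, hij, rfl⟩
    · exact ⟨_, hρ.trans (update_inv ρ i), by simp [comp_update]⟩
    · exact ⟨_, hρ.trans (comp_swap ρ hij), rfl⟩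
    · exact ⟨_, hρ.trans (update_mul ρ hij), by simp [comp_update]⟩

end NielsenEquiv

theorem nielsenEquiv_iff_exists_nielsenEquiv_of {τ τ' : Fin m → G} :
    NielsenEquiv τ τ' ↔
      ∃ σ : Fin m → FreeGroup (Fin m),
        NielsenEquiv FreeGroup.of σ ∧ τ' = FreeGroup.lift τ ∘ σ := by
  have hτ : FreeGroup.lift τ ∘ FreeGroup.of = τ := funext fun i ↦ by simp
  constructor
  · intro h
    exact NielsenEquiv.exists_eq_comp (FreeGroup.lift τ) (by rwa [hτ])
  · rintro ⟨σ, hσ, rfl⟩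
    simpa only [hτ] using hσ.map (FreeGroup.lift τ)

end NielsenEquiv

section FreeGroupBases

variable {m : ℕ}

namespace NielsenEquiv

theorem exists_lift_comp_lift_eq_id {σ : Fin m → FreeGroup (Fin m)}
    (h : NielsenEquiv FreeGroup.of σ) :
    ∃ ρ, NielsenEquiv FreeGroup.of ρ ∧
      (FreeGroup.lift σ).comp (FreeGroup.lift ρ) = MonoidHom.id _ := by
  obtain ⟨ρ, hρ, hσρ⟩ := nielsenEquiv_iff_exists_nielsenEquiv_of.1 h.symm
  exact ⟨ρ, hρ, FreeGroup.ext_hom _ _ fun i ↦ by simpa using (congrFun hσρ i).symm⟩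

theorem exists_mulAut {σ : Fin m → FreeGroup (Fin m)} (h : NielsenEquiv FreeGroup.of σ) :
    ∃ α : MulAut (FreeGroup (Fin m)), ∀ i, σ i = α (FreeGroup.of i) := by
  obtain ⟨ρ, hρ, hσρ⟩ := h.exists_lift_comp_lift_eq_id
  obtain ⟨π, -, hρπ⟩ := hρ.exists_lift_comp_lift_eq_id
  have hσπ : FreeGroup.lift σ = FreeGroup.lift π := by
    rw [← MonoidHom.comp_id (FreeGroup.lift σ), ← hρπ, ← MonoidHom.comp_assoc, hσρ,
      MonoidHom.id_comp]
  exact ⟨(FreeGroup.lift σ).toMulEquiv (FreeGroup.lift ρ) (hσπ ▸ hρπ) hσρ, fun i ↦ by simp⟩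

end NielsenEquiv

theorem exists_nielsenEquiv_isNielsenMinimal {α : Type*} [Fintype α] [DecidableEq α]
    (τ : Fin m → FreeGroup α) : ∃ σ, NielsenEquiv τ σ ∧ IsNielsenMinimal σ := by
  obtain ⟨σ, hσ, hmin⟩ := exists_minimalFor_of_wellFoundedLT (NielsenEquiv τ)
    (fun σ ↦ ∑ i, complexity (σ i)) ⟨τ, .refl τ⟩
  refine ⟨σ, hσ, fun a b hab ↦ ?_⟩
  rw [complexity_signedEntry]
  by_contra! hlt
  set x := signedEntry σ a * signedEntry σ b
  have hsum : ∑ i, complexity (update σ a.1 x i) < ∑ i, complexity (σ i) := by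
    refine Finset.sum_lt_sum (fun i _ ↦ ?_) ⟨a.1, Finset.mem_univ _, by simpa using hlt⟩
    obtain rfl | hi := eq_or_ne i a.1
    · simpa using hlt.le
    · simp [hi]
  exact hsum.not_ge (hmin (hσ.trans (.update_signedEntry_mul σ hab)) hsum.le)

theorem nielsenEquiv_of_of_forall_exists_eq_or_eq_inv {v : Fin m → FreeGroup (Fin m)}
    (h : ∀ k, ∃ i, v i = FreeGroup.of k ∨ v i = (FreeGroup.of k)⁻¹) :
    NielsenEquiv FreeGroup.of v := by
  choose e he using h
  have hword (k : Fin m) : (v (e k)).toWord.map Prod.fst = [k] := by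
    rcases he k with h | h <;> simp [h, toWord_inv, invRev]
  have hinj : Injective e := fun k l hkl ↦ by simpa [hkl, hword l] using (hword k).symm
  let π : Equiv.Perm (Fin m) := .ofBijective e (Finite.injective_iff_bijective.1 hinj)
  have hπ : NielsenEquiv FreeGroup.of (v ∘ π) := .of_eq_or_eq_inv he
  simpa [comp_assoc] using hπ.trans (.comp_perm (v ∘ π) π.symm)

theorem HasSurvivingLetters.nielsenEquiv_of {v : Fin m → FreeGroup (Fin m)}
    (hv : HasSurvivingLetters v) (hsurj : Surjective (FreeGroup.lift v)) :
    NielsenEquiv FreeGroup.of v := by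
  refine nielsenEquiv_of_of_forall_exists_eq_or_eq_inv fun k ↦ ?_
  obtain ⟨x, hx⟩ := hsurj (FreeGroup.of k)
  simpa only [hx] using hv.exists_eq_or_eq_inv_of_lift (x := x) (by rw [hx, norm_of])

theorem nielsenEquiv_of_mulAut (α : MulAut (FreeGroup (Fin m))) :
    NielsenEquiv FreeGroup.of fun i ↦ α (FreeGroup.of i) := by
  obtain ⟨σ, hσ, hmin⟩ := exists_nielsenEquiv_isNielsenMinimal fun i ↦ α (FreeGroup.of i)
  obtain ⟨β, hβ⟩ : ∃ β : MulAut (FreeGroup (Fin m)), ∀ i, σ i = β (FreeGroup.of i) := by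
    obtain ⟨ρ, hρ, rfl⟩ := NielsenEquiv.exists_eq_comp α.toMonoidHom hσ
    obtain ⟨γ, hγ⟩ := hρ.exists_mulAut
    exact ⟨α * γ, fun i ↦ congrArg α (hγ i)⟩
  have hne : ∀ i, σ i ≠ 1 := fun i ↦ by simp [hβ]
  have hlift : FreeGroup.lift σ = β.toMonoidHom := FreeGroup.ext_hom _ _ fun i ↦ by simp [hβ]
  have hsurj : Surjective (FreeGroup.lift σ) := hlift ▸ β.surjective
  exact ((hmin.hasSurvivingLetters hne).nielsenEquiv_of hsurj).trans hσ.symm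

theorem nielsenEquiv_of_iff_exists_mulAut {σ : Fin m → FreeGroup (Fin m)} :
    NielsenEquiv FreeGroup.of σ ↔
      ∃ α : MulAut (FreeGroup (Fin m)), ∀ i, σ i = α (FreeGroup.of i) := by
  refine ⟨NielsenEquiv.exists_mulAut, ?_⟩
  rintro ⟨α, hα⟩
  exact funext hα ▸ nielsenEquiv_of_mulAut α

end FreeGroupBases

/-- Two `m`-tuples are Nielsen-equivalent in `G` iff they are related by an
automorphism of the free group of rank `m`. -/
theorem nielsenEquiv_iff_exists_aut {G : Type*} [Group G] {m : ℕ} (hm : 1 ≤ m)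
    (τ τ' : Fin m → G) :
    NielsenEquiv τ τ' ↔
      ∃ α : MulAut (FreeGroup (Fin m)),
        ∀ i, τ' i = FreeGroup.lift τ (α (FreeGroup.of i)) := by
  rw [nielsenEquiv_iff_exists_nielsenEquiv_of]
  constructor
  · rintro ⟨σ, hσ, rfl⟩
    obtain ⟨α, hα⟩ := nielsenEquiv_of_iff_exists_mulAut.1 hσ
    exact ⟨α, fun i ↦ congrArg (FreeGroup.lift τ) (hα i)⟩
  · rintro ⟨α, hα⟩
    exact ⟨fun i ↦ α (FreeGroup.of i), nielsenEquiv_of_iff_exists_mulAut.2 ⟨α, fun _ ↦ rfl⟩,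
      funext hα⟩
end

section
/- Let m > 1, F = FreeGroup (Fin m) with free basis x_i = FreeGroup.of i, and let r, s ∈ F. Let G = F/⟪r⟫ with quotient homomorphism π : F → G. Suppose G has the Nielsen uniqueness property: every m-tuple of elements of G that generates G is Nielsen-equivalent in G to the tuple (π(x_1),...,π(x_m)). Then G is isomorphic to F/⟪s⟫ if and only if there exists an automorphism α of F such that α(s) = r or α(s) = r^{-1}. -/
/-! Elementary Nielsen moves are induced by automorphisms of `F`. Hence, under Nielsen uniqueness,
an isomorphism `F/⟪s⟫ ≃ F/⟪r⟫` comes from an automorphism `α` of `F` such that `α s` and `r` have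
the same normal closure, and by Magnus' conjugacy theorem `α s` is then conjugate to `r` or `r⁻¹`.

Magnus' theorem is proved by induction on the length of `r`. If some weight function `φ` on the
letters, nonzero at a letter `t` of `r`, gives `r` weight zero, then Reidemeister–Schreier rewriting
along `φ` replaces `r` by a shorter word in letters `(k, x)`, where `k` is the weight of the prefix
before an occurrence of `x`. The consequences of `r` become the consequences of all translates of
the new word, and comparing the extreme levels in `r` and `s` shows that the rewritten words have
the same normal closure up to one translation. If no such `φ` exists, then `r` is a power of a
letter. The comparison of levels rests on the Freiheitssatz, which is obtained by the same
induction; there finitely many translates are handled one at a time, by amalgamating one-relator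
groups over the free subgroup generated by their common letters.
-/

namespace OneRelator

open Subgroup

universe u v

section NormalClosure

variable {G H : Type*} [Group G] [Group H]

lemma mem_normalClosure_self (a : G) : a ∈ normalClosure {a} :=
  subset_normalClosure rfl

lemma normalClosure_singleton_le_iff {a : G} {N : Subgroup G} [N.Normal] :
    normalClosure {a} ≤ N ↔ a ∈ N :=
  normalClosure_subset_iff.symm.trans Set.singleton_subset_iff

lemma normalClosure_singleton_eq_bot_iff {a : G} : normalClosure {a} = ⊥ ↔ a = 1 :=
  normalClosure_eq_bot_iff.trans Set.singleton_subset_iff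

lemma normalClosure_singleton_inv (a : G) : normalClosure {a⁻¹} = normalClosure {a} :=
  le_antisymm (normalClosure_singleton_le_iff.2 (inv_mem (mem_normalClosure_self a)))
    (normalClosure_singleton_le_iff.2 (inv_mem_iff.1 (mem_normalClosure_self a⁻¹)))

lemma isConj_inv {a b : G} (h : IsConj a b) : IsConj a⁻¹ b⁻¹ := by
  obtain ⟨c, rfl⟩ := isConj_iff.1 h
  exact isConj_iff.2 ⟨c, conj_inv.symm⟩

lemma mem_iff_of_isConj {a b : G} (h : IsConj a b) (N : Subgroup G) [hN : N.Normal] :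
    a ∈ N ↔ b ∈ N := by
  obtain ⟨c, rfl⟩ := isConj_iff.1 h
  rw [hN.mem_comm_iff, inv_mul_cancel_left]

lemma normalClosure_singleton_eq_of_isConj {a b : G} (h : IsConj a b) :
    normalClosure {a} = normalClosure {b} :=
  le_antisymm
    (normalClosure_singleton_le_iff.2 ((mem_iff_of_isConj h _).2 (mem_normalClosure_self b)))
    (normalClosure_singleton_le_iff.2 ((mem_iff_of_isConj h _).1 (mem_normalClosure_self a)))

lemma map_mem_normalClosure (f : G →* H) {s : Set G} {t : Set H}
    (hst : ∀ x ∈ s, f x ∈ normalClosure t) {x : G} (hx : x ∈ normalClosure s) :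
    f x ∈ normalClosure t :=
  normalClosure_le_normal (N := (normalClosure t).comap f) hst hx

lemma exists_finset_mem_normalClosure_image {ι : Type*} (f : ι → G) {x : G}
    (hx : x ∈ normalClosure (Set.range f)) : ∃ C : Finset ι, x ∈ normalClosure (f '' C) := by
  classical
  have hdir : Directed (· ≤ ·) fun C : Finset ι => normalClosure (f '' C) :=
    Monotone.directed_le fun C D hCD => normalClosure_mono (Set.image_mono hCD)
  rw [← mem_iSup_of_directed hdir]
  refine normalClosure_le_normal ?_ hx
  rintro _ ⟨i, rfl⟩
  exact mem_iSup_of_mem {i} (subset_normalClosure ⟨i, by simp, rfl⟩)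

lemma exists_amalgam {ι : Type v} {G : Type u} [Group G] (A : Subgroup G) (N : ι → Subgroup G)
    [∀ i, (N i).Normal] (hA : ∀ i, Disjoint A (N i)) :
    ∃ (P : Type (max v u)) (_ : Group P) (f : ι → G →* P),
      (∀ i, (f i).ker = N i) ∧ ∀ i j, Set.EqOn (f i) (f j) A := by
  let φ : ∀ i, A →* G ⧸ N i := fun i => (QuotientGroup.mk' (N i)).comp A.subtype
  have hφ : ∀ i, Function.Injective (φ i) := fun i =>
    (injective_iff_map_eq_one _).2 fun a ha =>
      Subtype.ext (disjoint_def.1 (hA i) a.2 ((QuotientGroup.eq_one_iff _).1 ha))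
  refine ⟨Monoid.PushoutI φ, inferInstance,
    fun i => (Monoid.PushoutI.of i).comp (QuotientGroup.mk' (N i)), fun i => ?_,
    fun i j a ha => ?_⟩
  · exact (MonoidHom.ker_comp_of_injective _ _ (Monoid.PushoutI.of_injective hφ i)).trans
      (QuotientGroup.ker_mk' (N i))
  · exact (Monoid.PushoutI.of_apply_eq_base φ i ⟨a, ha⟩).trans
      (Monoid.PushoutI.of_apply_eq_base φ j ⟨a, ha⟩).symm

end NormalClosure

section Letters

variable {α β G : Type*} [Group G]

/-- The subgroup of a free group generated by the letters in `S`. -/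
def supported (S : Set α) : Subgroup (FreeGroup α) :=
  closure (FreeGroup.of '' S)

lemma of_mem_supported {S : Set α} {x : α} (hx : x ∈ S) : FreeGroup.of x ∈ supported S :=
  subset_closure ⟨x, hx, rfl⟩

lemma supported_le {S : Set α} {H : Subgroup (FreeGroup α)}
    (h : ∀ x ∈ S, FreeGroup.of x ∈ H) : supported S ≤ H :=
  (closure_le H).2 (Set.forall_mem_image.2 h)

lemma supported_mono {S T : Set α} (h : S ⊆ T) : supported S ≤ supported T :=
  supported_le fun _ hx => of_mem_supported (h hx)

lemma eqOn_supported {S : Set α} {f g : FreeGroup α →* G}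
    (h : ∀ x ∈ S, f (FreeGroup.of x) = g (FreeGroup.of x)) : Set.EqOn f g (supported S) :=
  MonoidHom.eqOn_closure (Set.forall_mem_image.2 h)

lemma map_mem_supported {S : Set α} {T : Set β} {f : α → β} (hf : Set.MapsTo f S T)
    {w : FreeGroup α} (hw : w ∈ supported S) : FreeGroup.map f w ∈ supported T :=
  supported_le (H := (supported T).comap (FreeGroup.map f))
    (fun _ hx => of_mem_supported (hf hx)) hw

lemma mem_supported_iff_toWord [DecidableEq α] {S : Set α} {w : FreeGroup α} :
    w ∈ supported S ↔ ∀ p ∈ w.toWord, p.1 ∈ S := by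
  refine ⟨fun hw => ?_, fun hw => ?_⟩
  · induction hw using closure_induction with
    | mem _ hx =>
      obtain ⟨x, hx, rfl⟩ := hx
      simpa using hx
    | one => simp
    | mul v w _ _ hv hw =>
      intro p hp
      exact (List.mem_append.1 ((FreeGroup.toWord_mul_sublist v w).subset hp)).elim (hv p) (hw p)
    | inv w _ hw =>
      rw [FreeGroup.toWord_inv]
      simp only [FreeGroup.invRev, List.mem_reverse, List.mem_map]
      rintro _ ⟨p, hp, rfl⟩
      exact hw p hp
  · rw [← FreeGroup.mk_toWord (x := w), ← FreeGroup.lift_of_apply (FreeGroup.mk _),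
      FreeGroup.lift_mk]
    refine list_prod_mem fun g hg => ?_
    obtain ⟨⟨x, b⟩, hp, rfl⟩ := List.mem_map.1 hg
    cases b
    · exact inv_mem (of_mem_supported (hw _ hp))
    · exact of_mem_supported (hw _ hp)

/-- The letters occurring in the reduced form of `w`, defined without decidable equality as those
which are needed to express `w`. -/
def letters (w : FreeGroup α) : Set α :=
  {x | w ∉ supported {x}ᶜ}

lemma notMem_letters_iff {x : α} {w : FreeGroup α} : x ∉ letters w ↔ w ∈ supported {x}ᶜ :=
  not_not

lemma mem_letters_iff_toWord [DecidableEq α] {x : α} {w : FreeGroup α} :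
    x ∈ letters w ↔ ∃ p ∈ w.toWord, p.1 = x := by
  simp only [letters, Set.mem_ofPred_eq, mem_supported_iff_toWord, Set.mem_compl_singleton_iff,
    ne_eq, not_forall, not_not, exists_prop]

lemma mem_supported_iff {S : Set α} {w : FreeGroup α} : w ∈ supported S ↔ letters w ⊆ S := by
  classical
  simp only [mem_supported_iff_toWord, Set.subset_def, mem_letters_iff_toWord]
  exact ⟨fun h x ⟨p, hp, hpx⟩ => hpx ▸ h p hp, fun h p hp => h p.1 ⟨p, hp, rfl⟩⟩

lemma mem_supported_letters (w : FreeGroup α) : w ∈ supported (letters w) :=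
  mem_supported_iff.2 subset_rfl

lemma finite_letters (w : FreeGroup α) : (letters w).Finite := by
  classical
  refine (w.toWord.map Prod.fst).finite_toSet.subset fun x hx => ?_
  obtain ⟨p, hp, rfl⟩ := mem_letters_iff_toWord.1 hx
  exact List.mem_map_of_mem hp

lemma letters_nonempty {w : FreeGroup α} (hw : w ≠ 1) : (letters w).Nonempty := by
  by_contra h
  have := mem_supported_letters w
  rw [Set.not_nonempty_iff_eq_empty.1 h] at this
  exact hw (by simpa [supported] using this)

lemma norm_map_le [DecidableEq α] [DecidableEq β] (f : α → β) (w : FreeGroup α) :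
    (FreeGroup.map f w).norm ≤ w.norm := by
  rw [← FreeGroup.mk_toWord (x := w), FreeGroup.map.mk]
  exact FreeGroup.norm_mk_le.trans (by simp [FreeGroup.norm])

lemma lt_norm_of_mem_letters [DecidableEq α] {ν : FreeGroup α → ℕ} (one : ν 1 = 0)
    (mul : ∀ v w, ν (v * w) ≤ ν v + ν w) (inv : ∀ w, ν w⁻¹ = ν w)
    (of : ∀ y, ν (FreeGroup.of y) ≤ 1) {x : α} (hx : ν (FreeGroup.of x) = 0) {w : FreeGroup α}
    (hw : x ∈ letters w) : ν w < w.norm := by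
  have hmk (L : List (α × Bool)) : ν (FreeGroup.mk L) ≤ (L.filter fun p => p.1 ≠ x).length := by
    induction L with
    | nil => exact one.le
    | cons p L ih =>
      obtain ⟨y, b⟩ := p
      have hy : ν (FreeGroup.mk [(y, b)]) = ν (FreeGroup.of y) := by
        cases b
        · exact inv (FreeGroup.of y)
        · rfl
      have hcons := mul (FreeGroup.mk [(y, b)]) (FreeGroup.mk L)
      rw [FreeGroup.mul_mk, List.singleton_append, hy] at hcons
      have := of y
      by_cases hyx : y = x
      · subst hyx
        simp only [ne_eq, not_true_eq_false, decide_false, Bool.false_eq_true, not_false_eq_true,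
          List.filter_cons_of_neg]
        simp only [ne_eq] at ih
        omega
      · simp only [ne_eq, hyx, not_false_eq_true, decide_true, List.filter_cons_of_pos,
          List.length_cons]
        simp only [ne_eq] at ih
        omega
  obtain ⟨p, hp, rfl⟩ := mem_letters_iff_toWord.1 hw
  calc ν w = ν (FreeGroup.mk w.toWord) := by rw [FreeGroup.mk_toWord]
    _ ≤ _ := hmk _
    _ < w.norm := List.length_filter_lt_length_iff_exists.2 ⟨p, hp, by simp⟩

/-- The endomorphism of a free group that deletes the letter `x`, the retraction onto the subgroup
generated by the other letters. -/
def delete [DecidableEq α] (x : α) : FreeGroup α →* FreeGroup α :=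
  FreeGroup.lift fun y => if y = x then 1 else FreeGroup.of y

@[simp] lemma delete_of_self [DecidableEq α] (x : α) : delete x (FreeGroup.of x) = 1 := by
  simp [delete]

@[simp] lemma delete_of_ne [DecidableEq α] {x y : α} (h : y ≠ x) :
    delete x (FreeGroup.of y) = FreeGroup.of y := by
  simp [delete, h]

lemma delete_eq_self [DecidableEq α] {x : α} {w : FreeGroup α} (hw : w ∈ supported {x}ᶜ) :
    delete x w = w :=
  eqOn_supported (g := MonoidHom.id _) (fun _ hy => delete_of_ne hy) hw

lemma norm_delete_lt [DecidableEq α] {x : α} {w : FreeGroup α} (hx : x ∈ letters w) :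
    (delete x w).norm < w.norm := by
  refine lt_norm_of_mem_letters (ν := fun w => (delete x w).norm) (by simp) (fun v w => ?_)
    (fun w => ?_) (fun y => ?_) (by simp) hx
  · rw [map_mul]
    exact FreeGroup.norm_mul_le _ _
  · rw [map_inv, FreeGroup.norm_inv_eq]
  · by_cases hy : y = x
    · simp [hy]
    · simp [hy]

/-- A shortest conjugate of `w` works: a letter missing from some conjugate of it could be
deleted. -/
lemma exists_isConj_forall_letters_subset [DecidableEq α] (w : FreeGroup α) :
    ∃ v, IsConj w v ∧ v.norm ≤ w.norm ∧ ∀ h, IsConj v h → letters v ⊆ letters h := by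
  obtain ⟨v, hv, hmin⟩ := exists_minimalFor_of_wellFoundedLT (IsConj w) FreeGroup.norm
    ⟨w, IsConj.refl w⟩
  have hmin' (h) (hh : IsConj w h) : v.norm ≤ h.norm :=
    (le_total v.norm h.norm).elim id (hmin hh)
  refine ⟨v, hv, hmin' w (IsConj.refl w), fun h hh x hx => ?_⟩
  by_contra hxh
  have hdel : IsConj h (delete x v) := by
    simpa only [delete_eq_self (notMem_letters_iff.1 hxh)] using (delete x).map_isConj hh.symm
  exact (norm_delete_lt hx).not_ge (hmin' _ ((hv.trans hh).trans hdel))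

lemma mem_normalClosure_of_mem_normalClosure_union {S T : Set α} {R R' : Set (FreeGroup α)}
    (hR : R ⊆ supported S) (hR' : R' ⊆ supported T)
    (hfree : Disjoint (supported (S ∩ T)) (normalClosure R))
    (hfree' : Disjoint (supported (S ∩ T)) (normalClosure R')) {w : FreeGroup α}
    (hw : w ∈ supported S) (hmem : w ∈ normalClosure (R ∪ R')) : w ∈ normalClosure R := by
  classical
  obtain ⟨P, _, f, hker, hagree⟩ := exists_amalgam (supported (S ∩ T))
    (fun b : Bool => normalClosure (cond b R R')) (by rintro (_ | _); exacts [hfree', hfree])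
  let g : FreeGroup α →* P := FreeGroup.lift fun x =>
    if x ∈ S then f true (FreeGroup.of x) else f false (FreeGroup.of x)
  have hgS : Set.EqOn g (f true) (supported S) := eqOn_supported fun x hx => by simp [g, hx]
  have hgT : Set.EqOn g (f false) (supported T) := eqOn_supported fun x hx => by
    by_cases hxS : x ∈ S
    · simpa [g, hxS] using hagree true false (of_mem_supported ⟨hxS, hx⟩)
    · simp [g, hxS]
  have hg : g w = 1 := by
    refine normalClosure_le_normal (N := g.ker) ?_ hmem
    rintro v (hv | hv)
    · exact (hgS (hR hv)).trans ((hker true).ge (subset_normalClosure hv))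
    · exact (hgT (hR' hv)).trans ((hker false).ge (subset_normalClosure hv))
  exact (hker true).le ((hgS hw).symm.trans hg)

end Letters

section Shift

variable {α : Type*}

/-- The action of `ℤ` on the free group on `ℤ × α` by translation of the first coordinate of the
letters, their *level*. -/
def shiftHom (α : Type*) : Multiplicative ℤ →* MulAut (FreeGroup (ℤ × α)) where
  toFun c := FreeGroup.freeGroupCongr ((Equiv.addRight c.toAdd).prodCongr (Equiv.refl α))
  map_one' := by
    apply MulEquiv.toMonoidHom_injective
    ext p
    simp
  map_mul' c d := by
    apply MulEquiv.toMonoidHom_injective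
    ext ⟨k, x⟩
    simp [add_assoc, add_comm c.toAdd]

/-- The automorphism raising the levels of all letters by `c`. -/
def shift (c : ℤ) : MulAut (FreeGroup (ℤ × α)) :=
  shiftHom α (Multiplicative.ofAdd c)

lemma shift_eq_map (c : ℤ) (w : FreeGroup (ℤ × α)) :
    shift c w = FreeGroup.map (fun p => (p.1 + c, p.2)) w :=
  rfl

@[simp] lemma shift_of (c k : ℤ) (x : α) :
    shift c (FreeGroup.of (k, x)) = FreeGroup.of (k + c, x) := by
  rw [shift_eq_map, FreeGroup.map.of]

@[simp] lemma shift_zero (w : FreeGroup (ℤ × α)) : shift 0 w = w := by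
  simp [shift]

lemma shift_shift (c d : ℤ) (w : FreeGroup (ℤ × α)) : shift c (shift d w) = shift (c + d) w := by
  simp [shift, ofAdd_add]

@[simp] lemma shift_neg_shift (c : ℤ) (w : FreeGroup (ℤ × α)) : shift (-c) (shift c w) = w := by
  rw [shift_shift, neg_add_cancel, shift_zero]

@[simp] lemma shift_shift_neg (c : ℤ) (w : FreeGroup (ℤ × α)) : shift c (shift (-c) w) = w := by
  rw [shift_shift, add_neg_cancel, shift_zero]

lemma norm_shift [DecidableEq α] (c : ℤ) (w : FreeGroup (ℤ × α)) : (shift c w).norm = w.norm := by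
  refine le_antisymm (norm_map_le _ w) ?_
  conv_lhs => rw [← shift_neg_shift c w]
  exact norm_map_le _ (shift c w)

lemma shift_mem_supported_compl {k : ℤ} {a : α} {w : FreeGroup (ℤ × α)}
    (hw : w ∈ supported {(k, a)}ᶜ) (c : ℤ) : shift c w ∈ supported {(k + c, a)}ᶜ := by
  refine map_mem_supported (S := {(k, a)}ᶜ) (T := {(k + c, a)}ᶜ) ?_ hw
  rintro ⟨j, b⟩ hj
  simpa [Prod.ext_iff] using hj

lemma mem_letters_shift {c k : ℤ} {a : α} {w : FreeGroup (ℤ × α)} :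
    (k, a) ∈ letters (shift c w) ↔ (k - c, a) ∈ letters w := by
  rw [← not_iff_not, notMem_letters_iff, notMem_letters_iff]
  refine ⟨fun h => ?_, fun h => ?_⟩
  · simpa [sub_eq_add_neg] using shift_mem_supported_compl h (-c)
  · simpa using shift_mem_supported_compl h c

lemma mem_normalClosure_shift {c : ℤ} {ρ w : FreeGroup (ℤ × α)} :
    w ∈ normalClosure {shift c ρ} ↔ shift (-c) w ∈ normalClosure {ρ} := by
  refine ⟨map_mem_normalClosure (shift (-c)).toMonoidHom ?_, fun h => ?_⟩
  · rintro _ rfl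
    simpa using mem_normalClosure_self ρ
  · rw [← shift_shift_neg c w]
    refine map_mem_normalClosure (shift c).toMonoidHom ?_ h
    rintro _ rfl
    exact mem_normalClosure_self _

/-- The conclusion of the Freiheitssatz for the relator `r`: for each letter `x` of `r`, the
remaining letters are free generators of a subgroup of the one-relator group of `r`. -/
def MagnusFree (r : FreeGroup α) : Prop :=
  ∀ x ∈ letters r, Disjoint (supported {x}ᶜ) (normalClosure {r})

lemma MagnusFree.shift {ρ : FreeGroup (ℤ × α)} (hρ : MagnusFree ρ) (c : ℤ) :
    MagnusFree (shift c ρ) := by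
  rintro ⟨k, a⟩ hk
  refine disjoint_def.2 fun {w} hw hmem => ?_
  have hw' : (k - c, a) ∉ letters (OneRelator.shift (-c) w) := by
    rw [mem_letters_shift, sub_neg_eq_add, sub_add_cancel]
    exact notMem_letters_iff.2 hw
  exact (EmbeddingLike.map_eq_one_iff (f := OneRelator.shift (-c))).1
    (disjoint_def.1 (hρ _ (mem_letters_shift.1 hk)) (notMem_letters_iff.1 hw')
      (mem_normalClosure_shift.1 hmem))

/-- The translates of `ρ` by the elements of `C`. -/
def translates (ρ : FreeGroup (ℤ × α)) (C : Set ℤ) : Set (FreeGroup (ℤ × α)) :=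
  (fun c => shift c ρ) '' C

lemma translates_singleton (ρ : FreeGroup (ℤ × α)) (c : ℤ) : translates ρ {c} = {shift c ρ} :=
  Set.image_singleton

lemma normalClosure_translates_congr {ρ σ : FreeGroup (ℤ × α)} (h : IsConj ρ σ) (C : Set ℤ) :
    normalClosure (translates ρ C) = normalClosure (translates σ C) := by
  have hle {ρ σ : FreeGroup (ℤ × α)} (h : IsConj ρ σ) :
      normalClosure (translates ρ C) ≤ normalClosure (translates σ C) := by
    refine normalClosure_le_normal ?_
    rintro _ ⟨c, hc, rfl⟩
    exact (mem_iff_of_isConj ((shift c).toMonoidHom.map_isConj h) _).2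
      (subset_normalClosure (Set.mem_image_of_mem _ hc))
  exact le_antisymm (hle h) (hle h.symm)

/-- The levels at which the letter `a` occurs in `w`. -/
def levels (a : α) (w : FreeGroup (ℤ × α)) : Set ℤ :=
  {k | (k, a) ∈ letters w}

lemma finite_levels (a : α) (w : FreeGroup (ℤ × α)) : (levels a w).Finite :=
  (finite_letters w).preimage (Prod.mk_left_injective a).injOn

lemma exists_isLeast_levels {a : α} {w : FreeGroup (ℤ × α)} {k : ℤ} (hk : k ∈ levels a w) :
    ∃ m, IsLeast (levels a w) m :=
  Set.exists_min_image _ id (finite_levels a w) ⟨k, hk⟩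

lemma exists_isGreatest_levels {a : α} {w : FreeGroup (ℤ × α)} {k : ℤ} (hk : k ∈ levels a w) :
    ∃ M, IsGreatest (levels a w) M :=
  Set.exists_max_image _ id (finite_levels a w) ⟨k, hk⟩

/-- The letters `(k, x)` such that `p ≤ k ≤ q` in case `x = a`; levels of other letters are free. -/
def window (a : α) (p q : ℤ) : Set (ℤ × α) :=
  {y | y.2 = a → y.1 ∈ Set.Icc p q}

variable {ρ h : FreeGroup (ℤ × α)} {a : α} {m M c : ℤ} {C : Set ℤ}

lemma mem_normalClosure_translates_of_insert (hρ : MagnusFree ρ) {j p q : ℤ}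
    (hj : j ∈ levels a ρ) (hC : ∀ d ∈ C, j + c - d ∉ levels a ρ)
    (hlev : ∀ k ∈ levels a ρ, k ≠ j → k + c ∈ Set.Icc p q)
    (hwin : Disjoint (supported (window a p q)) (normalClosure (translates ρ C)))
    (hh : j + c ∉ levels a h) (hmem : h ∈ normalClosure (translates ρ (insert c C))) :
    h ∈ normalClosure (translates ρ C) := by
  refine mem_normalClosure_of_mem_normalClosure_union (S := {(j + c, a)}ᶜ)
    (T := letters (shift c ρ)) (R' := {shift c ρ}) ?_
    (Set.singleton_subset_iff.2 (mem_supported_letters _)) ?_ ?_ (notMem_letters_iff.1 hh) ?_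
  · rintro _ ⟨d, hd, rfl⟩
    exact notMem_letters_iff.1 fun h => hC d hd (mem_letters_shift.1 h)
  · refine hwin.mono_left (supported_mono ?_)
    rintro ⟨k, b⟩ ⟨hk, hkl⟩ rfl
    have := hlev _ (mem_letters_shift.1 hkl) fun h => hk (by simp [← h])
    rwa [sub_add_cancel] at this
  · refine (hρ.shift c (j + c, a) ?_).mono_left (supported_mono Set.inter_subset_left)
    rwa [mem_letters_shift, add_sub_cancel_right]
  · rwa [translates, Set.image_insert_eq, Set.insert_eq, Set.union_comm] at hmem

lemma mem_normalClosure_translates_of_insert_max (hρ : MagnusFree ρ)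
    (hm : m ∈ lowerBounds (levels a ρ)) (hM : IsGreatest (levels a ρ) M) (hC : ∀ d ∈ C, d < c)
    (hwin : ∀ p q, q < p + (M - m) →
      Disjoint (supported (window a p q)) (normalClosure (translates ρ C)))
    (hh : M + c ∉ levels a h) (hmem : h ∈ normalClosure (translates ρ (insert c C))) :
    h ∈ normalClosure (translates ρ C) := by
  refine mem_normalClosure_translates_of_insert hρ hM.1 (fun d hd hl => ?_) (fun k hk hkM => ?_)
    (hwin (m + c) (M + c - 1) (by omega)) hh hmem
  · have := hM.2 hl
    have := hC d hd
    omega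
  · have := hm hk
    have := hM.2 hk
    exact ⟨by omega, by omega⟩

lemma mem_normalClosure_translates_of_insert_min (hρ : MagnusFree ρ)
    (hm : IsLeast (levels a ρ) m) (hM : M ∈ upperBounds (levels a ρ)) (hC : ∀ d ∈ C, c < d)
    (hwin : ∀ p q, q < p + (M - m) →
      Disjoint (supported (window a p q)) (normalClosure (translates ρ C)))
    (hh : m + c ∉ levels a h) (hmem : h ∈ normalClosure (translates ρ (insert c C))) :
    h ∈ normalClosure (translates ρ C) := by
  refine mem_normalClosure_translates_of_insert hρ hm.1 (fun d hd hl => ?_) (fun k hk hkm => ?_)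
    (hwin (m + c + 1) (M + c) (by omega)) hh hmem
  · have := hm.2 hl
    have := hC d hd
    omega
  · have := hm.2 hk
    have := hM hk
    exact ⟨by omega, by omega⟩

lemma notMem_levels_of_mem_supported_window {p q k : ℤ} (hh : h ∈ supported (window a p q))
    (hk : k ∉ Set.Icc p q) : k ∉ levels a h :=
  fun hl => hk (mem_supported_iff.1 hh hl rfl)

lemma disjoint_supported_window (hρ : MagnusFree ρ) (hm : IsLeast (levels a ρ) m)
    (hM : IsGreatest (levels a ρ) M) (C : Finset ℤ) {p q : ℤ} (hpq : q < p + (M - m)) :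
    Disjoint (supported (window a p q)) (normalClosure (translates ρ C)) := by
  induction C using Finset.strongInduction generalizing p q with
  | H C ih =>
    rcases C.eq_empty_or_nonempty with rfl | hne
    · simp [translates]
    refine disjoint_def.2 fun {h} hh hmem => ?_
    by_cases hq : M + C.max' hne ≤ q
    · have hc := C.min'_mem hne
      have := C.min'_le_max' hne
      rw [← Finset.insert_erase hc, Finset.coe_insert] at hmem
      refine disjoint_def.1 (ih _ (Finset.erase_ssubset hc) hpq) hh
        (mem_normalClosure_translates_of_insert_min hρ hm hM.2
          (fun d hd => C.min'_lt_of_mem_erase_min' hne hd)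
          (fun p q hpq => ih _ (Finset.erase_ssubset hc) hpq)
          (notMem_levels_of_mem_supported_window hh fun hp => ?_) hmem)
      have := hp.1
      omega
    · have hc := C.max'_mem hne
      rw [← Finset.insert_erase hc, Finset.coe_insert] at hmem
      refine disjoint_def.1 (ih _ (Finset.erase_ssubset hc) hpq) hh
        (mem_normalClosure_translates_of_insert_max hρ hm.2 hM
          (fun d hd => C.lt_max'_of_mem_erase_max' hne hd)
          (fun p q hpq => ih _ (Finset.erase_ssubset hc) hpq)
          (notMem_levels_of_mem_supported_window hh fun hp => hq hp.2) hmem)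

/-- In a smallest set of translates of `ρ` with consequence `h`, the extreme translates cannot be
dropped, so their extreme letters occur in `h`. -/
lemma exists_mem_normalClosure_translates_Icc (hρ : MagnusFree ρ) (h1 : h ≠ 1)
    (hmem : h ∈ normalClosure (translates ρ Set.univ)) :
    ∃ c d, c ≤ d ∧ h ∈ normalClosure (translates ρ (Set.Icc c d)) ∧
      ∀ a m M, IsLeast (levels a ρ) m → IsGreatest (levels a ρ) M →
        m + c ∈ levels a h ∧ M + d ∈ levels a h := by
  rw [translates, Set.image_univ] at hmem
  obtain ⟨C, hC, hmin⟩ := exists_minimal_of_wellFoundedLT _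
    (exists_finset_mem_normalClosure_image _ hmem)
  have herase (c) (hc : c ∈ C) : h ∉ normalClosure (translates ρ (C.erase c)) := fun h' =>
    Finset.notMem_erase c C (hmin h' (Finset.erase_subset c C) hc)
  have hne : C.Nonempty := by
    by_contra hC'
    rw [Finset.not_nonempty_iff_eq_empty.1 hC'] at hC
    exact h1 (by simpa using hC)
  have hIcc : (C : Set ℤ) ⊆ Set.Icc (C.min' hne) (C.max' hne) := fun c hc =>
    ⟨C.min'_le c hc, C.le_max' c hc⟩
  have hinsert (c) (hc : c ∈ C) :
      h ∈ normalClosure (translates ρ (insert c ((C.erase c : Finset ℤ) : Set ℤ))) := by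
    rwa [← Finset.coe_insert, Finset.insert_erase hc]
  refine ⟨C.min' hne, C.max' hne, C.min'_le_max' hne,
    normalClosure_mono (Set.image_mono hIcc) hC, fun a m M hm hM => ?_⟩
  constructor <;> by_contra hh
  · exact herase _ (C.min'_mem hne) (mem_normalClosure_translates_of_insert_min hρ hm hM.2
      (fun d hd => C.min'_lt_of_mem_erase_min' hne hd)
      (fun p q => disjoint_supported_window hρ hm hM _) hh (hinsert _ (C.min'_mem hne)))
  · exact herase _ (C.max'_mem hne) (mem_normalClosure_translates_of_insert_max hρ hm.2 hM
      (fun d hd => C.lt_max'_of_mem_erase_max' hne hd)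
      (fun p q => disjoint_supported_window hρ hm hM _) hh (hinsert _ (C.max'_mem hne)))

lemma exists_normalClosure_eq_shift {σ : FreeGroup (ℤ × α)} (hρ : MagnusFree ρ)
    (hσ : MagnusFree σ) (hρ1 : ρ ≠ 1) (hσ1 : σ ≠ 1)
    (hσρ : σ ∈ normalClosure (translates ρ Set.univ))
    (hρσ : ρ ∈ normalClosure (translates σ Set.univ)) :
    ∃ c, normalClosure {ρ} = normalClosure {shift c σ} := by
  obtain ⟨c, d, hcd, hσρ, hlevρ⟩ := exists_mem_normalClosure_translates_Icc hρ hσ1 hσρ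
  obtain ⟨c', d', hcd', hρσ, hlevσ⟩ := exists_mem_normalClosure_translates_Icc hσ hρ1 hρσ
  obtain ⟨⟨k, a⟩, hk⟩ := letters_nonempty hρ1
  obtain ⟨m, hm⟩ := exists_isLeast_levels hk
  obtain ⟨M, hM⟩ := exists_isGreatest_levels hk
  obtain ⟨hmσ, hMσ⟩ := hlevρ a m M hm hM
  obtain ⟨m', hm'⟩ := exists_isLeast_levels hmσ
  obtain ⟨M', hM'⟩ := exists_isGreatest_levels hmσ
  obtain ⟨hmρ, hMρ⟩ := hlevσ a m' M' hm' hM'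
  have hmin : 0 ≤ c + c' := by linarith [hm.2 hmρ, hm'.2 hmσ]
  have hmax : d + d' ≤ 0 := by linarith [hM.2 hMρ, hM'.2 hMσ]
  obtain rfl : d = c := by omega
  obtain rfl : c' = -d := by omega
  obtain rfl : d' = -d := by omega
  rw [Set.Icc_self, translates_singleton] at hσρ hρσ
  refine ⟨-d, le_antisymm (normalClosure_singleton_le_iff.2 hρσ)
    (normalClosure_singleton_le_iff.2 (mem_normalClosure_shift.1 hσρ))⟩

end Shift

section Rewriting

variable {α : Type*}

/-- The homomorphism to `ℤ` with value `φ x` at the letter `x`. For `φ = Pi.single x 1` it is the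
exponent sum of `x`. -/
def weight (φ : α → ℤ) : FreeGroup α →* Multiplicative ℤ :=
  FreeGroup.lift fun x => Multiplicative.ofAdd (φ x)

@[simp] lemma weight_of (φ : α → ℤ) (x : α) :
    weight φ (FreeGroup.of x) = Multiplicative.ofAdd (φ x) :=
  FreeGroup.lift_apply_of

lemma weight_sub (φ ψ : α → ℤ) (w : FreeGroup α) :
    weight (φ - ψ) w = weight φ w / weight ψ w := by
  have : weight (φ - ψ) = weight φ / weight ψ := by
    ext x
    simp
  exact DFunLike.congr_fun this w

lemma weight_zsmul (n : ℤ) (φ : α → ℤ) (w : FreeGroup α) :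
    weight (n • φ) w = weight φ w ^ n := by
  have : weight (n • φ) = weight φ ^ n := by
    ext x
    rw [MonoidHom.zpow_apply, weight_of, weight_of, ← ofAdd_zsmul, Pi.smul_apply]
  exact DFunLike.congr_fun this w

variable [DecidableEq α]

lemma exists_weight_eq_one {t x : α} (hxt : x ≠ t) {w : FreeGroup α}
    (hw : weight (Pi.single x 1) w ≠ 1) : ∃ φ : α → ℤ, φ t ≠ 0 ∧ weight φ w = 1 := by
  refine ⟨(weight (Pi.single x 1) w).toAdd • Pi.single t 1 -
    (weight (Pi.single t 1) w).toAdd • Pi.single x 1, by simpa [hxt.symm] using hw, ?_⟩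
  rw [weight_sub, weight_zsmul, weight_zsmul, div_eq_one]
  exact Multiplicative.toAdd.injective (by simp [mul_comm])

/-- The Reidemeister–Schreier rewriting along `φ`: each occurrence of a letter `x` in a word is
labelled with the level reached by then, `x` raising the level by `φ x`, and the letter `t` is
dropped. -/
def levelHom (t : α) (φ : α → ℤ) :
    FreeGroup α →* FreeGroup (ℤ × α) ⋊[shiftHom α] Multiplicative ℤ :=
  FreeGroup.lift fun x => ⟨if x = t then 1 else FreeGroup.of (0, x), Multiplicative.ofAdd (φ x)⟩

lemma levelHom_right (t : α) (φ : α → ℤ) (w : FreeGroup α) :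
    (levelHom t φ w).right = weight φ w := by
  have : SemidirectProduct.rightHom.comp (levelHom t φ) = weight φ := by
    ext x
    simp [levelHom]
  exact DFunLike.congr_fun this w

/-- The word obtained by rewriting `w` along `φ`, starting at level `k`. -/
def rewriting (t : α) (φ : α → ℤ) (k : ℤ) (w : FreeGroup α) : FreeGroup (ℤ × α) :=
  shift k (levelHom t φ w).left

variable {t : α} {φ : α → ℤ}

lemma rewriting_of_self (k : ℤ) : rewriting t φ k (FreeGroup.of t) = 1 := by
  simp [rewriting, levelHom]

lemma rewriting_of_ne {x : α} (hx : x ≠ t) (k : ℤ) :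
    rewriting t φ k (FreeGroup.of x) = FreeGroup.of (k, x) := by
  simp [rewriting, levelHom, hx]

lemma rewriting_one (k : ℤ) : rewriting t φ k 1 = 1 := by
  simp [rewriting]

lemma rewriting_mul (k : ℤ) (v w : FreeGroup α) :
    rewriting t φ k (v * w) =
      rewriting t φ k v * rewriting t φ (k + (weight φ v).toAdd) w := by
  rw [rewriting, map_mul, SemidirectProduct.mul_left, map_mul, levelHom_right, rewriting,
    rewriting, ← shift_shift]
  rfl

lemma rewriting_inv (k : ℤ) (w : FreeGroup α) :
    rewriting t φ k w⁻¹ = (rewriting t φ (k - (weight φ w).toAdd) w)⁻¹ := by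
  rw [eq_inv_iff_mul_eq_one, ← rewriting_one (t := t) (φ := φ) k, ← inv_mul_cancel w,
    rewriting_mul, map_inv, toAdd_inv, sub_eq_add_neg]

lemma shift_rewriting (c k : ℤ) (w : FreeGroup α) :
    shift c (rewriting t φ k w) = rewriting t φ (c + k) w :=
  shift_shift c k _

lemma rewriting_conj {r : FreeGroup α} (hr : weight φ r = 1) (k : ℤ) (g : FreeGroup α) :
    rewriting t φ k (g * r * g⁻¹) = rewriting t φ k g *
      rewriting t φ (k + (weight φ g).toAdd) r * (rewriting t φ k g)⁻¹ := by
  rw [rewriting_mul, rewriting_mul, rewriting_inv, map_mul, hr, mul_one, add_sub_cancel_right]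

lemma rewriting_mem_normalClosure {r h : FreeGroup α} (hr : weight φ r = 1)
    (hh : h ∈ normalClosure {r}) : weight φ h = 1 ∧
      ∀ k, rewriting t φ k h ∈ normalClosure (translates (rewriting t φ 0 r) Set.univ) := by
  induction hh using closure_induction with
  | mem h hh =>
    obtain ⟨_, rfl, hconj⟩ := Group.mem_conjugatesOfSet_iff.1 hh
    obtain ⟨g, rfl⟩ := isConj_iff.1 hconj
    refine ⟨by simp [hr], fun k => ?_⟩
    rw [rewriting_conj hr, ← add_zero (k + _), ← shift_rewriting]
    exact normalClosure_normal.conj_mem _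
      (subset_normalClosure (Set.mem_image_of_mem _ (Set.mem_univ _))) _
  | one => exact ⟨map_one _, fun k => by simp [rewriting_one]⟩
  | mul v w _ _ hv hw =>
    refine ⟨by rw [map_mul, hv.1, hw.1, mul_one], fun k => ?_⟩
    rw [rewriting_mul]
    exact mul_mem (hv.2 _) (hw.2 _)
  | inv w _ hw =>
    refine ⟨by rw [map_inv, hw.1, inv_one], fun k => ?_⟩
    rw [rewriting_inv]
    exact inv_mem (hw.2 _)

lemma rewriting_mem_supported {S : Set α} {w : FreeGroup α} (hw : w ∈ supported S) (k : ℤ) :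
    rewriting t φ k w ∈ supported (Prod.snd ⁻¹' S) := by
  induction hw using closure_induction generalizing k with
  | mem _ hx =>
    obtain ⟨x, hx, rfl⟩ := hx
    by_cases hxt : x = t
    · rw [hxt, rewriting_of_self]
      exact one_mem _
    · rw [rewriting_of_ne hxt]
      exact of_mem_supported hx
  | one => simp [rewriting_one]
  | mul v w _ _ hv hw =>
    rw [rewriting_mul]
    exact mul_mem (hv _) (hw _)
  | inv w _ hw =>
    rw [rewriting_inv]
    exact inv_mem (hw _)

lemma rewriting_eq_map {S : Set α} (ht : t ∉ S) (hφ : ∀ x ∈ S, φ x = 0) {w : FreeGroup α}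
    (hw : w ∈ supported S) (k : ℤ) : rewriting t φ k w = FreeGroup.map (Prod.mk k) w := by
  have h : levelHom t φ w = SemidirectProduct.inl (FreeGroup.map (Prod.mk 0) w) :=
    eqOn_supported (g := SemidirectProduct.inl.comp (FreeGroup.map (Prod.mk 0))) (fun x hx => by
      have hxt : x ≠ t := ne_of_mem_of_not_mem hx ht
      ext <;> simp [levelHom, hφ x hx, hxt]) hw
  rw [rewriting, h, SemidirectProduct.left_inl, shift_eq_map, FreeGroup.map.comp]
  simp [Function.comp_def]

lemma weight_comp_snd_rewriting {ψ : α → ℤ} (hψ : ψ t = 0) (k : ℤ) (w : FreeGroup α) :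
    weight (ψ ∘ Prod.snd) (rewriting t φ k w) = weight ψ w := by
  induction w using FreeGroup.induction_on generalizing k with
  | C1 => simp [rewriting_one]
  | of x =>
    by_cases hxt : x = t
    · simp [hxt, rewriting_of_self, hψ]
    · simp [rewriting_of_ne hxt]
  | inv_of x hx => rw [rewriting_inv, map_inv, map_inv, hx]
  | mul v w hv hw => rw [rewriting_mul, map_mul, map_mul, hv, hw]

lemma norm_rewriting_lt {w : FreeGroup α} (ht : t ∈ letters w) (k : ℤ) :
    (rewriting t φ k w).norm < w.norm := by
  have hk (k w) : (rewriting t φ k w).norm = (rewriting t φ 0 w).norm := by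
    rw [← norm_shift k (rewriting t φ 0 w), shift_rewriting, add_zero]
  rw [hk]
  refine lt_norm_of_mem_letters (ν := fun w => (rewriting t φ 0 w).norm) ?_ (fun v w => ?_)
    (fun w => ?_) (fun x => ?_) ?_ ht
  · simp [rewriting_one]
  · rw [rewriting_mul, ← hk (0 + (weight φ v).toAdd) w]
    exact FreeGroup.norm_mul_le _ _
  · rw [rewriting_inv, FreeGroup.norm_inv_eq, hk]
  · by_cases hxt : x = t
    · simp [hxt, rewriting_of_self]
    · simp [rewriting_of_ne hxt]
  · simp [rewriting_of_self]

/-- A left inverse of `rewriting t φ 0` on words of weight zero if `φ t ≠ 0`: the letter `(k, x)` is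
read as `x`, preceded by a power of `t` leading to the level `k`. Division rounds down, as not every
level is reached by a power of `t`. -/
def readBack (t : α) (φ : α → ℤ) : FreeGroup (ℤ × α) →* FreeGroup α :=
  FreeGroup.lift fun p => FreeGroup.of t ^ (p.1 / φ t) * FreeGroup.of p.2 *
    FreeGroup.of t ^ (-((p.1 + φ p.2) / φ t))

lemma readBack_rewriting (ht : φ t ≠ 0) (k : ℤ) (w : FreeGroup α) :
    readBack t φ (rewriting t φ k w) = FreeGroup.of t ^ (k / φ t) * w *
      FreeGroup.of t ^ (-((k + (weight φ w).toAdd) / φ t)) := by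
  induction w using FreeGroup.induction_on generalizing k with
  | C1 => simp [rewriting_one]
  | of x =>
    by_cases hxt : x = t
    · rw [hxt, rewriting_of_self, weight_of, toAdd_ofAdd, Int.add_ediv_of_dvd_right dvd_rfl,
        Int.ediv_self ht, map_one]
      group
    · simp [rewriting_of_ne hxt, readBack]
  | inv_of x hx =>
    rw [rewriting_inv, map_inv, hx, map_inv, toAdd_inv, sub_add_cancel, ← sub_eq_add_neg]
    group
  | mul v w hv hw =>
    rw [rewriting_mul, map_mul, hv, hw, map_mul, toAdd_mul, ← add_assoc]
    group

lemma isConj_readBack_rewriting (ht : φ t ≠ 0) {w : FreeGroup α} (hw : weight φ w = 1) (k : ℤ) :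
    IsConj w (readBack t φ (rewriting t φ k w)) := by
  rw [readBack_rewriting ht, hw, isConj_iff]
  exact ⟨FreeGroup.of t ^ (k / φ t), by simp⟩

lemma rewriting_ne_one (ht : φ t ≠ 0) {w : FreeGroup α} (hw : weight φ w = 1) (hw1 : w ≠ 1)
    (k : ℤ) : rewriting t φ k w ≠ 1 := fun h =>
  hw1 (isConj_one_right.1 (by simpa [h] using (isConj_readBack_rewriting ht hw k).symm))

end Rewriting

section Magnus

variable {α : Type u}

/-- Rewriting a word shortens it but adds levels to the letters, so an induction on the length has
to range over all alphabets. -/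
lemma norm_induction {P : ∀ {α : Type u}, FreeGroup α → Prop}
    (step : ∀ {α : Type u} [DecidableEq α] (r : FreeGroup α),
      (∀ ρ : FreeGroup (ℤ × α), ρ.norm < r.norm → P ρ) → P r) (r : FreeGroup α) : P r := by
  classical
  suffices h : ∀ n, ∀ {α : Type u} [DecidableEq α] (r : FreeGroup α), r.norm = n → P r from
    h _ r rfl
  intro n
  induction n using Nat.strong_induction_on with
  | h n ih =>
    rintro α _ r rfl
    exact step r fun ρ hρ => ih _ hρ ρ rfl

lemma exists_isConj_rewriting [DecidableEq α] {r : FreeGroup α} {t : α} (ht : t ∈ letters r)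
    (φ : α → ℤ) : ∃ ρ, IsConj (rewriting t φ 0 r) ρ ∧ ρ.norm < r.norm ∧
      ∀ h, IsConj ρ h → letters ρ ⊆ letters h := by
  obtain ⟨ρ, hconj, hnorm, hρ⟩ := exists_isConj_forall_letters_subset (rewriting t φ 0 r)
  exact ⟨ρ, hconj, hnorm.trans_lt (norm_rewriting_lt ht 0), hρ⟩

lemma exists_levels_rewriting [DecidableEq α] {r h : FreeGroup α} {t : α} {φ : α → ℤ}
    (hφ : φ t ≠ 0) (hr : weight φ r = 1) {ρ : FreeGroup (ℤ × α)}
    (hconj : IsConj (rewriting t φ 0 r) ρ) (hρ : MagnusFree ρ) (hh : h ∈ normalClosure {r})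
    (h1 : h ≠ 1) :
    ∃ c d, c ≤ d ∧ ∀ k a, (k, a) ∈ letters ρ → ∃ m ≤ k, ∃ M ≥ k,
      m + c ∈ levels a (rewriting t φ 0 h) ∧ M + d ∈ levels a (rewriting t φ 0 h) := by
  obtain ⟨hh0, hmem⟩ := rewriting_mem_normalClosure (t := t) hr hh
  obtain ⟨c, d, hcd, -, hlev⟩ := exists_mem_normalClosure_translates_Icc hρ
    (rewriting_ne_one hφ hh0 h1 0) (normalClosure_translates_congr hconj _ ▸ hmem 0)
  refine ⟨c, d, hcd, fun k a hk => ?_⟩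
  obtain ⟨m, hm⟩ := exists_isLeast_levels hk
  obtain ⟨M, hM⟩ := exists_isGreatest_levels hk
  exact ⟨m, hm.2 hk, M, hM.2 hk, hlev a m M hm hM⟩

lemma exists_isConj_readBack_mem_supported [DecidableEq α] {t : α} {k : ℤ}
    {ρ : FreeGroup (ℤ × α)} (hρ : ρ ∈ supported {p | p.1 = k}) :
    ∃ v ∈ supported {t}ᶜ, IsConj (readBack t (Pi.single t 1) ρ) v := by
  refine ⟨_, ?_, isConj_iff.2 ⟨FreeGroup.of t ^ (-k), rfl⟩⟩
  refine supported_le (H := (supported {t}ᶜ).comap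
    ((MulAut.conj (FreeGroup.of t ^ (-k))).toMonoidHom.comp (readBack t (Pi.single t 1)))) ?_ hρ
  rintro ⟨j, x⟩ (rfl : j = k)
  suffices h : FreeGroup.of t ^ (-j) * readBack t (Pi.single t 1) (FreeGroup.of (j, x)) *
      (FreeGroup.of t ^ (-j))⁻¹ ∈ supported {t}ᶜ from h
  by_cases hxt : x = t
  · simp [readBack, hxt, zpow_add]
  · simpa [readBack, hxt, mul_assoc] using of_mem_supported (S := {t}ᶜ) hxt

lemma disjoint_of_letters_subset {r : FreeGroup α} {x : α} (hr : letters r ⊆ {x}) :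
    Disjoint (supported {x}ᶜ) (normalClosure {r}) := by
  classical
  refine disjoint_def.2 fun {h} hh hmem => ?_
  have hdel : r ∈ (delete x).ker := supported_le (S := {x})
    (fun y hy => (congrArg (fun y => delete x (FreeGroup.of y)) hy).trans (delete_of_self x))
    (mem_supported_iff.2 hr)
  rw [← delete_eq_self hh]
  exact normalClosure_singleton_le_iff.2 hdel hmem

section Freiheitssatz

variable [DecidableEq α] {r : FreeGroup α} {x : α}

lemma exists_isConj_mem_supported_compl_of_weight_eq_one (hr : weight (Pi.single x 1) r = 1)
    {ρ : FreeGroup (ℤ × α)} (hconj : IsConj (rewriting x (Pi.single x 1) 0 r) ρ)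
    (hρ : MagnusFree ρ) (hdisj : ¬ Disjoint (supported {x}ᶜ) (normalClosure {r})) :
    ∃ v ∈ supported {x}ᶜ, IsConj r v := by
  obtain ⟨h, hh, hmem, h1⟩ : ∃ h ∈ supported {x}ᶜ, h ∈ normalClosure {r} ∧ h ≠ 1 := by
    simpa [disjoint_def] using hdisj
  have hφ : (Pi.single x 1 : α → ℤ) x ≠ 0 := by simp
  have hlevel {a j} (hj : j ∈ levels a (rewriting x (Pi.single x 1) 0 h)) : j = 0 := by
    rw [rewriting_eq_map (S := {x}ᶜ) (fun hx => hx rfl) (fun y hy => Pi.single_eq_of_ne hy 1)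
      hh] at hj
    exact mem_supported_iff.1 (map_mem_supported (T := {p : ℤ × α | p.1 = 0})
      (fun _ _ => rfl) hh) hj
  obtain ⟨c, d, hcd, hdet⟩ := exists_levels_rewriting hφ hr hconj hρ hmem h1
  have hρd : ρ ∈ supported {p | p.1 = -d} := mem_supported_iff.2 <| by
    rintro ⟨k, a⟩ hk
    obtain ⟨m, hm, M, hM, hmc, hMd⟩ := hdet k a hk
    have := hlevel hmc
    have := hlevel hMd
    change k = -d
    omega
  obtain ⟨v, hv, hρv⟩ := exists_isConj_readBack_mem_supported (t := x) hρd
  exact ⟨v, hv, (isConj_readBack_rewriting hφ hr 0).trans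
    (((readBack x _).map_isConj hconj).trans hρv)⟩

lemma disjoint_of_weight_ne_one (hx : weight (Pi.single x 1) r ≠ 1) {t : α} (hxt : x ≠ t)
    {φ : α → ℤ} (hφ : φ t ≠ 0) (hr : weight φ r = 1) {ρ : FreeGroup (ℤ × α)}
    (hconj : IsConj (rewriting t φ 0 r) ρ) (hρ : MagnusFree ρ) :
    Disjoint (supported {x}ᶜ) (normalClosure {r}) := by
  obtain ⟨k, hk⟩ : ∃ k, (k, x) ∈ letters ρ := by
    by_contra! hk
    have hρ1 : weight (Pi.single x 1 ∘ Prod.snd) ρ = 1 :=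
      eqOn_supported (g := 1) (fun p hp => by
        have hpx : p.2 ≠ x := fun h => hk p.1 (h ▸ hp)
        simp [hpx]) (mem_supported_letters ρ)
    have hρr := isConj_iff_eq.1 ((weight (Pi.single x 1 ∘ Prod.snd)).map_isConj hconj)
    rw [weight_comp_snd_rewriting (Pi.single_eq_of_ne hxt.symm 1)] at hρr
    exact hx (hρr.trans hρ1)
  refine disjoint_def.2 fun {h} hh hmem => ?_
  by_contra h1
  obtain ⟨c, d, -, hdet⟩ := exists_levels_rewriting hφ hr hconj hρ hmem h1
  obtain ⟨m, -, M, -, hm, -⟩ := hdet k x hk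
  exact mem_supported_iff.1 (rewriting_mem_supported hh 0) hm rfl

end Freiheitssatz

theorem freiheitssatz {r : FreeGroup α} {x : α} (hx : ∀ h, IsConj r h → x ∈ letters h) :
    Disjoint (supported {x}ᶜ) (normalClosure {r}) := by
  induction r using norm_induction with
  | step r ih =>
    have hfree {ρ} (hnorm : ρ.norm < r.norm) (hρ : ∀ h, IsConj ρ h → letters ρ ⊆ letters h) :
        MagnusFree ρ := fun y hy => ih ρ hnorm fun h hh => hρ h hh hy
    have hxr := hx r (IsConj.refl r)
    by_cases hsum : weight (Pi.single x 1) r = 1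
    · by_contra hdisj
      obtain ⟨ρ, hconj, hnorm, hρ⟩ := exists_isConj_rewriting hxr (Pi.single x 1)
      obtain ⟨v, hv, hrv⟩ := exists_isConj_mem_supported_compl_of_weight_eq_one hsum hconj
        (hfree hnorm hρ) hdisj
      exact notMem_letters_iff.2 hv (hx v hrv)
    · by_cases ht : letters r ⊆ {x}
      · exact disjoint_of_letters_subset ht
      obtain ⟨t, ht, htx⟩ := Set.not_subset.1 ht
      obtain ⟨φ, hφ, hr⟩ := exists_weight_eq_one (Ne.symm htx) hsum
      obtain ⟨ρ, hconj, hnorm, hρ⟩ := exists_isConj_rewriting ht φ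
      exact disjoint_of_weight_ne_one hsum (Ne.symm htx) hφ hr hconj (hfree hnorm hρ)

end Magnus

section Conjugacy

variable {α : Type u}

lemma exists_isConj_magnusFree (w : FreeGroup α) : ∃ v, IsConj w v ∧ MagnusFree v := by
  classical
  obtain ⟨v, hwv, -, hv⟩ := exists_isConj_forall_letters_subset w
  exact ⟨v, hwv, fun x hx => freiheitssatz fun h hh => hv h hh hx⟩

lemma eq_zpow_weight_of_mem_supported {x : α} {w : FreeGroup α} (hw : w ∈ supported {x}) :
    w = FreeGroup.of x ^ (weight 1 w).toAdd :=
  eqOn_supported (f := MonoidHom.id _) (g := (zpowersHom _ (FreeGroup.of x)).comp (weight 1))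
    (by rintro _ rfl; simp) hw

lemma weight_dvd_of_mem_normalClosure (φ : α → ℤ) {r w : FreeGroup α}
    (hw : w ∈ normalClosure {r}) : (weight φ r).toAdd ∣ (weight φ w).toAdd := by
  have hle : normalClosure {r} ≤ (zpowers (weight φ r)).comap (weight φ) :=
    normalClosure_singleton_le_iff.2 (mem_zpowers _)
  obtain ⟨n, hn⟩ := mem_zpowers_iff.1 (hle hw)
  exact ⟨n, by rw [← hn, toAdd_zpow, smul_eq_mul, mul_comm]⟩

lemma MagnusFree.letters_subset {r s : FreeGroup α} (hs : MagnusFree s) (hr1 : r ≠ 1)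
    (hr : r ∈ normalClosure {s}) : letters s ⊆ letters r := fun x hx => by
  by_contra hxr
  exact hr1 (disjoint_def.1 (hs x hx) (notMem_letters_iff.1 hxr) hr)

lemma isConj_or_isConj_inv_of_mem_supported_singleton {x : α} {r s : FreeGroup α}
    (hr : r ∈ supported {x}) (hr1 : r ≠ 1) (h : normalClosure {r} = normalClosure {s}) :
    IsConj s r ∨ IsConj s r⁻¹ := by
  obtain ⟨v, hsv, hv⟩ := exists_isConj_magnusFree s
  rw [normalClosure_singleton_eq_of_isConj hsv] at h
  have hrv : r ∈ normalClosure {v} := h ▸ mem_normalClosure_self r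
  have hvr : v ∈ normalClosure {r} := h ▸ mem_normalClosure_self v
  have hvx : v ∈ supported {x} :=
    mem_supported_iff.2 ((hv.letters_subset hr1 hrv).trans (mem_supported_iff.1 hr))
  have hassoc : (weight 1 v).toAdd = (weight 1 r).toAdd ∨
      (weight 1 v).toAdd = -(weight 1 r).toAdd :=
    Int.associated_iff.1 (associated_of_dvd_dvd (weight_dvd_of_mem_normalClosure 1 hrv)
      (weight_dvd_of_mem_normalClosure 1 hvr))
  rw [eq_zpow_weight_of_mem_supported hr, ← zpow_neg]
  rw [eq_zpow_weight_of_mem_supported hvx] at hsv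
  exact hassoc.imp (fun hn => by rwa [hn] at hsv) (fun hn => by rwa [hn] at hsv)

lemma exists_normalClosure_rewriting_eq [DecidableEq α] {r s : FreeGroup α} {t : α} {φ : α → ℤ}
    (hφ : φ t ≠ 0) (hr : weight φ r = 1) (hs : weight φ s = 1) (hr1 : r ≠ 1) (hs1 : s ≠ 1)
    (h : normalClosure {r} = normalClosure {s}) :
    ∃ c, normalClosure {rewriting t φ 0 r} = normalClosure {rewriting t φ c s} := by
  obtain ⟨ρ, hrρ, hρ⟩ := exists_isConj_magnusFree (rewriting t φ 0 r)
  obtain ⟨σ, hsσ, hσ⟩ := exists_isConj_magnusFree (rewriting t φ 0 s)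
  have hmem {v w : FreeGroup α} {ν ω : FreeGroup (ℤ × α)} (hv : weight φ v = 1)
      (hw : w ∈ normalClosure {v}) (hν : IsConj (rewriting t φ 0 v) ν)
      (hω : IsConj (rewriting t φ 0 w) ω) : ω ∈ normalClosure (translates ν Set.univ) := by
    rw [← normalClosure_translates_congr hν, ← mem_iff_of_isConj hω]
    exact (rewriting_mem_normalClosure hv hw).2 0
  have hne {v : FreeGroup α} {ν : FreeGroup (ℤ × α)} (hv : weight φ v = 1) (hv1 : v ≠ 1)
      (hν : IsConj (rewriting t φ 0 v) ν) : ν ≠ 1 := fun h =>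
    rewriting_ne_one hφ hv hv1 0 (isConj_one_left.1 (h ▸ hν))
  obtain ⟨c, hc⟩ := exists_normalClosure_eq_shift hρ hσ (hne hr hr1 hrρ) (hne hs hs1 hsσ)
    (hmem hr (h ▸ mem_normalClosure_self s) hrρ hsσ)
    (hmem hs (h ▸ mem_normalClosure_self r) hsσ hrρ)
  have hshift : IsConj (rewriting t φ c s) (shift c σ) := by
    simpa only [shift_rewriting, add_zero, MulEquiv.coe_toMonoidHom] using
      (shift c).toMonoidHom.map_isConj hsσ
  exact ⟨c, (normalClosure_singleton_eq_of_isConj hrρ).trans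
    (hc.trans (normalClosure_singleton_eq_of_isConj hshift).symm)⟩

lemma isConj_or_isConj_inv_of_rewriting [DecidableEq α] {r s : FreeGroup α} {t : α} {φ : α → ℤ}
    (hφ : φ t ≠ 0) (hr : weight φ r = 1) (hs : weight φ s = 1) {j k : ℤ}
    (h : IsConj (rewriting t φ k s) (rewriting t φ j r) ∨
      IsConj (rewriting t φ k s) (rewriting t φ j r)⁻¹) : IsConj s r ∨ IsConj s r⁻¹ := by
  have hsk := isConj_readBack_rewriting hφ hs k
  have hrj := (isConj_readBack_rewriting hφ hr j).symm
  refine h.imp (fun h => (hsk.trans ((readBack t φ).map_isConj h)).trans hrj) fun h => ?_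
  have h' := (readBack t φ).map_isConj h
  rw [map_inv] at h'
  exact (hsk.trans h').trans (isConj_inv hrj)

/-- **Magnus' conjugacy theorem**. -/
theorem isConj_or_isConj_inv_of_normalClosure_eq {r s : FreeGroup α}
    (h : normalClosure {r} = normalClosure {s}) : IsConj s r ∨ IsConj s r⁻¹ := by
  induction r using norm_induction with
  | @step α _ r ih =>
    have hrs1 : s = 1 ↔ r = 1 := by
      rw [← normalClosure_singleton_eq_bot_iff, ← h, normalClosure_singleton_eq_bot_iff]
    by_cases hr1 : r = 1
    · exact Or.inl (by rw [hr1, hrs1.2 hr1])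
    by_cases hred : ∃ t ∈ letters r, ∃ φ : α → ℤ, φ t ≠ 0 ∧ weight φ r = 1
    · obtain ⟨t, ht, φ, hφ, hr⟩ := hred
      have hs : weight φ s = 1 :=
        (rewriting_mem_normalClosure (t := t) hr (h ▸ mem_normalClosure_self s)).1
      obtain ⟨c, hc⟩ := exists_normalClosure_rewriting_eq hφ hr hs hr1 (mt hrs1.1 hr1) h
      exact isConj_or_isConj_inv_of_rewriting hφ hr hs (ih _ (norm_rewriting_lt ht 0) hc)
    · obtain ⟨x, hx⟩ := letters_nonempty hr1
      refine isConj_or_isConj_inv_of_mem_supported_singleton (x := x)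
        (mem_supported_iff.2 fun t ht => ?_) hr1 h
      by_contra htx
      refine hred ⟨t, ht, exists_weight_eq_one (Ne.symm htx) fun hrx => hred ⟨x, hx, _, ?_, hrx⟩⟩
      simp

end Conjugacy

section Nielsen

variable {G : Type*} [Group G] {m : ℕ} {τ τ' : Fin m → G}

lemma exists_mulAut_lift_eq (f g : Fin m → FreeGroup (Fin m))
    (hgf : ∀ i, FreeGroup.lift g (f i) = FreeGroup.of i)
    (hfg : ∀ i, FreeGroup.lift f (g i) = FreeGroup.of i)
    (hτ : ∀ i, FreeGroup.lift τ (f i) = τ' i) :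
    ∃ α : MulAut (FreeGroup (Fin m)), ∀ w, FreeGroup.lift τ (α w) = FreeGroup.lift τ' w :=
  ⟨(FreeGroup.lift f).toMulEquiv (FreeGroup.lift g)
    (FreeGroup.ext_hom _ _ fun i => by simpa using hgf i)
    (FreeGroup.ext_hom _ _ fun i => by simpa using hfg i),
    DFunLike.congr_fun (f := (FreeGroup.lift τ).comp (FreeGroup.lift f))
      (FreeGroup.ext_hom _ _ fun i => by simpa using hτ i)⟩

lemma exists_mulAut_of_nielsenMove (h : NielsenMove τ τ') :
    ∃ α : MulAut (FreeGroup (Fin m)), ∀ w, FreeGroup.lift τ (α w) = FreeGroup.lift τ' w := by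
  rcases h with ⟨i, rfl⟩ | ⟨i, j, -, rfl⟩ | ⟨i, j, hij, rfl⟩
  · refine exists_mulAut_lift_eq (Function.update FreeGroup.of i (FreeGroup.of i)⁻¹)
      (Function.update FreeGroup.of i (FreeGroup.of i)⁻¹) ?_ ?_ ?_ <;>
    · intro k
      by_cases hk : k = i
      · simp [hk]
      · simp [hk]
  · exact exists_mulAut_lift_eq (FreeGroup.of ∘ Equiv.swap i j) (FreeGroup.of ∘ Equiv.swap i j)
      (by simp) (by simp) (by simp)
  · refine exists_mulAut_lift_eq
      (Function.update FreeGroup.of i (FreeGroup.of i * FreeGroup.of j))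
      (Function.update FreeGroup.of i (FreeGroup.of i * (FreeGroup.of j)⁻¹)) ?_ ?_ ?_ <;>
    · intro k
      by_cases hk : k = i
      · simp [hk, hij.symm]
      · simp [hk]

lemma exists_mulAut_of_nielsenEquiv (h : NielsenEquiv τ τ') :
    ∃ α : MulAut (FreeGroup (Fin m)), ∀ w, FreeGroup.lift τ (α w) = FreeGroup.lift τ' w := by
  induction h with
  | refl => exact ⟨1, fun _ => rfl⟩
  | tail _ hmove ih =>
    obtain ⟨α, hα⟩ := ih
    obtain ⟨β, hβ⟩ := exists_mulAut_of_nielsenMove hmove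
    exact ⟨α * β, fun w => by rw [MulAut.mul_apply, hα, hβ]⟩

end Nielsen

section Presented

variable {ι G : Type*} [Group G] {R S : Set (FreeGroup ι)}

lemma closure_range_mulEquiv_of (e : PresentedGroup R ≃* G) :
    closure (Set.range fun i => e (PresentedGroup.of i)) = ⊤ := by
  rw [Set.range_comp' e, ← MulEquiv.coe_toMonoidHom, ← MonoidHom.map_closure,
    PresentedGroup.closure_range_of]
  exact map_top_of_surjective _ e.surjective

lemma lift_mulEquiv_of (e : PresentedGroup R ≃* G) (w : FreeGroup ι) :
    FreeGroup.lift (fun i => e (PresentedGroup.of i)) w = e (PresentedGroup.mk R w) :=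
  DFunLike.congr_fun (g := e.toMonoidHom.comp (PresentedGroup.mk R))
    (FreeGroup.ext_hom _ _ fun i => by simp [PresentedGroup.of]) w

lemma exists_mulAut_normalClosure_image_eq {m : ℕ} {R S : Set (FreeGroup (Fin m))}
    (e : PresentedGroup S ≃* PresentedGroup R)
    (h : NielsenEquiv (fun i => e (PresentedGroup.of i)) fun i => PresentedGroup.of i) :
    ∃ α : MulAut (FreeGroup (Fin m)), normalClosure (α '' S) = normalClosure R := by
  obtain ⟨α, hα⟩ := exists_mulAut_of_nielsenEquiv h
  have hmk (w) : e (PresentedGroup.mk S (α w)) = PresentedGroup.mk R w := by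
    rw [← lift_mulEquiv_of, hα]
    exact lift_mulEquiv_of (MulEquiv.refl _) w
  have hcomap : (normalClosure S).comap α.toMonoidHom = normalClosure R := ext fun w => by
    rw [← PresentedGroup.mk_eq_one_iff, ← hmk, map_eq_one_iff e e.injective,
      PresentedGroup.mk_eq_one_iff]
    rfl
  refine ⟨α.symm, ?_⟩
  rw [← hcomap, ← MulEquiv.coe_toMonoidHom, ← map_normalClosure S _ α.symm.surjective]
  exact map_equiv_eq_comap_symm' α.symm _

lemma nonempty_mulEquiv_of_normalClosure_eq (α : MulAut (FreeGroup ι))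
    (h : normalClosure (α '' R) = normalClosure S) :
    Nonempty (PresentedGroup R ≃* PresentedGroup S) :=
  ⟨QuotientGroup.congr _ _ α ((map_normalClosure R α.toMonoidHom α.surjective).trans h)⟩

end Presented

end OneRelator

/-- If the one-relator group `G = F/⟪r⟫` has the Nielsen uniqueness property,
then `G ≅ F/⟪s⟫` iff some automorphism of `F` carries `s` to `r` or `r⁻¹`. -/
theorem iso_iff_aut_of_nielsen_unique {m : ℕ} (hm : 1 < m)
    (r s : FreeGroup (Fin m))
    (hNU : ∀ τ : Fin m → PresentedGroup ({r} : Set (FreeGroup (Fin m))),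
      Subgroup.closure (Set.range τ) = ⊤ →
      NielsenEquiv τ (fun i => PresentedGroup.of i)) :
    Nonempty (PresentedGroup ({r} : Set (FreeGroup (Fin m))) ≃*
        PresentedGroup ({s} : Set (FreeGroup (Fin m)))) ↔
      ∃ α : MulAut (FreeGroup (Fin m)), α s = r ∨ α s = r⁻¹ := by
  constructor
  · rintro ⟨e⟩
    obtain ⟨α, hα⟩ := OneRelator.exists_mulAut_normalClosure_image_eq e.symm
      (hNU _ (OneRelator.closure_range_mulEquiv_of e.symm))
    rw [Set.image_singleton] at hα
    rcases OneRelator.isConj_or_isConj_inv_of_normalClosure_eq hα.symm with h | h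
    · obtain ⟨c, hc⟩ := isConj_iff.1 h
      exact ⟨MulAut.conj c * α, Or.inl hc⟩
    · obtain ⟨c, hc⟩ := isConj_iff.1 h
      exact ⟨MulAut.conj c * α, Or.inr hc⟩
  · rintro ⟨α, hα⟩
    have hcl : Subgroup.normalClosure {α s} = Subgroup.normalClosure {r} := by
      rcases hα with h | h
      · rw [h]
      · rw [h, OneRelator.normalClosure_singleton_inv]
    rw [← Set.image_singleton] at hcl
    obtain ⟨e⟩ := OneRelator.nonempty_mulEquiv_of_normalClosure_eq α hcl
    exact ⟨e.symm⟩
end
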